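/- arXiv:1109.2229 — 10 statements merged into one kernel-verified Lean document; each statement's English description precedes it below -/
import Mathlib

section
/- For every finite domain X, every database D over X, every finite class C of counting queries over X with |C| ≥ 3, and every α with 0 < α < 1, there exists a database D' over X of size m = ⌈ln|C| / α²⌉ such that max_{Q ∈ C} |Q(D) − Q(D')| ≤ α. -/
attribute [local instance] Classical.propDecidable

/-- The counting query determined by a predicate `φ : X → Bool`, evaluated on a database
(a multiset over `X`): the fraction of elements of the database satisfying `φ`. -/
noncomputable def cquery {X : Type*} (φ : X → Bool) (D : Multiset X) : ℝ :=
  ((D.filter (fun x => φ x = true)).card : ℝ) / (D.card : ℝ)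

open MeasureTheory ProbabilityTheory in
theorem aux_hoeff (p s : ℝ) (h0 : 0 ≤ p) (h1 : p ≤ 1) :
    p * Real.exp (s * (1 - p)) + (1 - p) * Real.exp (s * (0 - p)) ≤ Real.exp (s ^ 2 / 8) := by
  let μ : Measure ℝ := ENNReal.ofReal p • Measure.dirac 1 + ENNReal.ofReal (1 - p) • Measure.dirac 0
  have hμ : IsProbabilityMeasure μ := by
    constructor
    simp only [μ, Measure.add_apply, Measure.smul_apply, measure_univ, smul_eq_mul, mul_one]
    rw [← ENNReal.ofReal_add h0 (by linarith)]
    simp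
  have hint : ∀ f : ℝ → ℝ, ∫ x, f x ∂μ = p * f 1 + (1 - p) * f 0 := by
    intro f
    have hi : ∀ (a c : ℝ), Integrable f (ENNReal.ofReal c • Measure.dirac a) := fun a c =>
      (integrable_dirac (by simp)).smul_measure ENNReal.ofReal_ne_top
    rw [integral_add_measure (hi _ _) (hi _ _)]
    simp [integral_smul_measure, ENNReal.toReal_ofReal h0,
      ENNReal.toReal_ofReal (sub_nonneg.2 h1)]
  have hb : ∀ᵐ x ∂μ, (id x : ℝ) ∈ Set.Icc (0:ℝ) 1 := by
    simp only [μ, ae_add_measure_iff]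
    constructor <;> refine Measure.ae_smul_measure ?_ _ <;> simp [ae_dirac_eq]
  have h := (hasSubgaussianMGF_of_mem_Icc (μ := μ) (X := id) (a := 0) (b := 1)
    aemeasurable_id hb).mgf_le s
  have hm : ∫ x, id x ∂μ = p := by rw [hint]; simp
  rw [hm, mgf, hint] at h
  simp only [id] at h
  refine h.trans (Real.exp_le_exp.2 (le_of_eq ?_))
  push_cast
  simp
  ring

theorem aux_sum {X : Type*} (D : Multiset X) (φ : X → Bool) (F : ℝ → ℝ) :
    (D.map (fun x => F (if φ x = true then 1 else 0))).sum =
      ((D.filter (fun x => φ x = true)).card : ℝ) * F 1 +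
      ((D.card : ℝ) - ((D.filter (fun x => φ x = true)).card : ℝ)) * F 0 := by
  induction D using Multiset.induction_on with
  | empty => simp
  | cons a D ih =>
    rw [Multiset.map_cons, Multiset.sum_cons, ih]
    by_cases h : φ a = true
    · simp [h]; ring
    · simp [h]; ring

theorem aux_greedy {X J : Type*} (D : Multiset X) (hD : D ≠ 0) (S : Finset J) (g : J → X → ℝ)
    (hg : ∀ j x, 0 ≤ g j x) (c : ℝ) (hc : 0 ≤ c)
    (h : ∀ j ∈ S, (D.map (g j)).sum ≤ D.card * c) (m : ℕ) :
    ∃ D' : Multiset X, D'.card = m ∧ ∑ j ∈ S, (D'.map (g j)).prod ≤ c ^ m * S.card := by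
  induction m with
  | zero => exact ⟨0, by simp⟩
  | succ m ih =>
    obtain ⟨D', h1, h2⟩ := ih
    by_contra! hcon
    have key : ∀ x ∈ D, c ^ (m + 1) * S.card < ∑ j ∈ S, g j x * (D'.map (g j)).prod := by
      intro x _
      have := hcon (x ::ₘ D') (by simp [h1])
      simpa using this
    have hlt := Multiset.sum_lt_sum_of_nonempty hD key
    rw [Multiset.map_const', Multiset.sum_replicate, nsmul_eq_mul] at hlt
    have e : (D.map (fun x => ∑ j ∈ S, g j x * (D'.map (g j)).prod)).sum
        = ∑ j ∈ S, (D.map (g j)).sum * (D'.map (g j)).prod := by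
      simp_rw [← Multiset.sum_map_mul_right]
      exact Multiset.sum_map_sum_map D S.val
    rw [e] at hlt
    have : ∑ j ∈ S, (D.map (g j)).sum * (D'.map (g j)).prod
        ≤ ∑ j ∈ S, (D.card * c) * (D'.map (g j)).prod := by
      refine Finset.sum_le_sum fun j hj => mul_le_mul_of_nonneg_right (h j hj) ?_
      refine Multiset.prod_nonneg ?_
      intro a ha
      obtain ⟨x, _, rfl⟩ := Multiset.mem_map.1 ha
      exact hg j x
    rw [← Finset.mul_sum] at this
    have h3 := mul_le_mul_of_nonneg_left h2 (by positivity : 0 ≤ (D.card : ℝ) * c)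
    rw [pow_succ] at hlt
    nlinarith

theorem stmt0 {X : Type*} [Fintype X] (D : Multiset X) (hD : D ≠ 0)
    (C : Finset (X → Bool)) (hC : 3 ≤ C.card) (α : ℝ) (hα0 : 0 < α) (hα1 : α < 1) :
    ∃ D' : Multiset X, D'.card = ⌈Real.log (C.card : ℝ) / α ^ 2⌉₊ ∧
      ∀ φ ∈ C, |cquery φ D - cquery φ D'| ≤ α := by
  have hn : (0:ℝ) < D.card := by exact_mod_cast Multiset.card_pos.2 hD
  set m := ⌈Real.log (C.card : ℝ) / α ^ 2⌉₊ with hm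
  have hC3 : (3:ℝ) ≤ C.card := by exact_mod_cast hC
  have hlog : 0 < Real.log (C.card : ℝ) := Real.log_pos (by linarith)
  have hm0 : 0 < m := Nat.ceil_pos.2 (by positivity)
  have hmR : (0:ℝ) < m := by exact_mod_cast hm0
  have hmα : Real.log (C.card : ℝ) ≤ m * α ^ 2 :=
    (div_le_iff₀ (by positivity)).1 (Nat.le_ceil _)
  let σ : Bool → ℝ := fun b => if b then 4 * α else -(4 * α)
  have hσ : ∀ b, σ b ^ 2 = 16 * α ^ 2 := by intro b; cases b <;> simp [σ] <;> ring
  let E : (X → Bool) × Bool → ℝ → ℝ := fun j t => σ j.2 * (t - cquery j.1 D)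
  obtain ⟨D', h1, h2⟩ := aux_greedy D hD (C ×ˢ (Finset.univ : Finset Bool))
    (fun j x => Real.exp (E j (if j.1 x = true then 1 else 0)))
    (fun _ _ => (Real.exp_pos _).le) (Real.exp (2 * α ^ 2)) (Real.exp_pos _).le (by
      rintro ⟨φ, b⟩ _
      rw [aux_sum D φ (fun t => Real.exp (E (φ, b) t))]
      have hk : ((D.filter (fun x => φ x = true)).card : ℝ) = D.card * cquery φ D := by
        rw [cquery]; field_simp
      have hle : ((D.filter (fun x => φ x = true)).card : ℝ) ≤ D.card := by
        exact_mod_cast Multiset.card_le_card (Multiset.filter_le _ _)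
      have p0 : 0 ≤ cquery φ D := by rw [cquery]; positivity
      have p1 : cquery φ D ≤ 1 := by rw [cquery]; exact (div_le_one hn).2 hle
      have := aux_hoeff (cquery φ D) (σ b) p0 p1
      rw [hσ, show 16 * α ^ 2 / 8 = 2 * α ^ 2 by ring] at this
      have := mul_le_mul_of_nonneg_left this hn.le
      rw [hk]
      simp only [E]
      linarith) m
  refine ⟨D', h1, fun φ hφ => ?_⟩
  have hk : ((D'.filter (fun x => φ x = true)).card : ℝ) = m * cquery φ D' := by
    rw [cquery, h1]; field_simp
  have main : ∀ b, σ b * (cquery φ D' - cquery φ D) ≤ 4 * α ^ 2 := by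
    intro b
    have h3 := (Finset.single_le_sum (f := fun j : (X → Bool) × Bool =>
      (D'.map (fun x => Real.exp (E j (if j.1 x = true then 1 else 0)))).prod)
      (fun j _ => Multiset.prod_nonneg (by
        intro a ha
        obtain ⟨x, _, rfl⟩ := Multiset.mem_map.1 ha
        exact (Real.exp_pos _).le))
      (Finset.mem_product.2 ⟨hφ, Finset.mem_univ b⟩ : (φ, b) ∈ C ×ˢ (Finset.univ : Finset Bool))).trans h2
    have e : (D'.map (fun x => Real.exp (E (φ, b) (if φ x = true then 1 else 0)))).prod
        = Real.exp (m * (σ b * (cquery φ D' - cquery φ D))) := by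
      have := Real.exp_multiset_sum (D'.map (fun x => E (φ, b) (if φ x = true then 1 else 0)))
      rw [Multiset.map_map] at this
      refine this.symm.trans ?_
      rw [aux_sum D' φ (E (φ, b)), hk, h1]
      simp only [E]
      congr 1
      ring
    simp only at h3
    rw [e, Finset.card_product, ← Real.exp_nat_mul] at h3
    have hCe : (C.card : ℝ) ≤ Real.exp (m * α ^ 2) := (Real.log_le_iff_le_exp (by linarith)).1 hmα
    have h4 : (((C.card * (Finset.univ : Finset Bool).card : ℕ)) : ℝ) ≤ Real.exp (m * (2 * α ^ 2)) := by
      rw [show (m:ℝ) * (2 * α ^ 2) = m * α ^ 2 + m * α ^ 2 by ring, Real.exp_add]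
      push_cast
      simp only [Finset.card_univ, Fintype.card_bool]
      push_cast
      nlinarith
    have h5 := h3.trans (mul_le_mul_of_nonneg_left h4 (Real.exp_pos _).le)
    rw [← Real.exp_add, Real.exp_le_exp] at h5
    have : (m:ℝ) * (σ b * (cquery φ D' - cquery φ D)) ≤ m * (4 * α ^ 2) := by linarith
    exact le_of_mul_le_mul_left this hmR
  have ht := main true
  have hf := main false
  simp only [σ, if_true, Bool.false_eq_true, if_false] at ht hf
  rw [abs_le]
  constructor
  · by_contra! h; nlinarith
  · by_contra! h; nlinarith
end

section
/- For every finite domain X, every finite class C of counting queries over X with |C| ≥ 3, and every α with 0 < α < 1, the set N of all databases over X of size m = ⌈ln|C| / α²⌉ is an α-net for C; consequently the minimum cardinality N_α(C) of an α-net for C satisfies N_α(C) ≤ |X|^{⌈ln|C| / α²⌉}. -/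
attribute [local instance] Classical.propDecidable

open MeasureTheory ProbabilityTheory in
theorem hoeff_one {n : ℕ} (hn : 0 < n) (g : Fin n → ℝ) (a : ℝ)
    (hg : ∀ j, g j ∈ Set.Icc a (a + 1)) (t : ℝ) :
    ∑ j, Real.exp (t * (g j - (∑ k, g k) / n)) ≤ n * Real.exp (t ^ 2 / 8) := by
  haveI : Nonempty (Fin n) := ⟨⟨0, hn⟩⟩
  have hn' : (0 : ℝ) < n := by exact_mod_cast hn
  let μ : Measure (Fin n) := (PMF.uniformOfFintype (Fin n)).toMeasure
  have hint : ∀ f : Fin n → ℝ, ∫ j, f j ∂μ = (∑ k, f k) / n := by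
    intro f
    rw [PMF.integral_eq_sum]
    simp [PMF.uniformOfFintype_apply, ← Finset.mul_sum]
    ring
  have h := hasSubgaussianMGF_of_mem_Icc (μ := μ) (X := g) (a := a) (b := a + 1)
    (measurable_of_finite g).aemeasurable (Filter.Eventually.of_forall hg)
  have h2 := h.mgf_le t
  rw [mgf, hint, hint] at h2
  rw [div_le_iff₀ hn'] at h2
  refine h2.trans (le_of_eq ?_)
  rw [mul_comm]
  congr 2
  simp
  ring

theorem hoeff_count {n m : ℕ} (hn : 0 < n) (g : Fin n → ℝ) (a : ℝ)
    (hg : ∀ j, g j ∈ Set.Icc a (a + 1)) (α : ℝ) (hα : 0 < α) :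
    ((Finset.univ.filter (fun f : Fin m → Fin n =>
      α * m < ∑ i, (g (f i) - (∑ k, g k) / n))).card : ℝ) ≤
      (n : ℝ) ^ m * Real.exp (-2 * m * α ^ 2) := by
  set p := (∑ k, g k) / n with hp
  have h1 : ((Finset.univ.filter (fun f : Fin m → Fin n =>
      α * m < ∑ i, (g (f i) - p))).card : ℝ) ≤
      ∑ f : Fin m → Fin n, Real.exp (4 * α * (∑ i, (g (f i) - p) - α * m)) := by
    rw [Finset.card_filter]
    push_cast
    refine Finset.sum_le_sum fun f _ => ?_
    split_ifs with h
    · apply Real.one_le_exp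
      have : 0 < ∑ i, (g (f i) - p) - α * m := by linarith
      positivity
    · positivity
  have h2 : ∑ f : Fin m → Fin n, Real.exp (4 * α * (∑ i, (g (f i) - p) - α * m)) =
      (∑ j, Real.exp (4 * α * (g j - p))) ^ m * Real.exp (- 4 * m * α ^ 2) := by
    rw [Fintype.sum_pow, Finset.sum_mul]
    refine Finset.sum_congr rfl fun f _ => ?_
    rw [← Real.exp_sum, ← Real.exp_add, ← Finset.mul_sum]
    congr 1
    ring
  rw [h2] at h1
  refine h1.trans ?_
  have h3 := hoeff_one hn g a hg (4 * α)
  rw [← hp] at h3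
  have h4 : (∑ j, Real.exp (4 * α * (g j - p))) ^ m ≤
      (n * Real.exp ((4 * α) ^ 2 / 8)) ^ m :=
    pow_le_pow_left₀ (Finset.sum_nonneg fun _ _ => (Real.exp_pos _).le) h3 m
  refine (mul_le_mul_of_nonneg_right h4 (Real.exp_pos _).le).trans (le_of_eq ?_)
  rw [mul_pow, ← Real.exp_nat_mul, mul_assoc, ← Real.exp_add]
  congr 2
  ring

theorem cquery_map {X : Type*} (φ : X → Bool) {n : ℕ} (d : Fin n → X) :
    cquery φ (Multiset.map d Finset.univ.val) =
      (∑ j, (if φ (d j) = true then (1 : ℝ) else 0)) / n := by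
  unfold cquery
  rw [Multiset.filter_map, Multiset.card_map, Multiset.card_map]
  congr 1
  · rw [← Finset.filter_val, Finset.card_val, Finset.card_filter]
    push_cast
    rfl
  · simp

theorem exists_sample {X : Type*} (C : Finset (X → Bool)) (hC : 3 ≤ C.card)
    (α : ℝ) (hα0 : 0 < α) (D : Multiset X) (hD : D ≠ 0) :
      ∃ f : Fin ⌈Real.log (C.card : ℝ) / α ^ 2⌉₊ → X,
        ∀ φ ∈ C, |cquery φ D - cquery φ (Multiset.map f Finset.univ.val)| ≤ α := by
  set m := ⌈Real.log (C.card : ℝ) / α ^ 2⌉₊ with hm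
  obtain ⟨n, d, rfl⟩ : ∃ (n : ℕ) (d : Fin n → X), D = Multiset.map d Finset.univ.val := by
    induction D using Quotient.inductionOn with
    | h l => exact ⟨l.length, l.get, by simp [Fin.univ_val_map]⟩
  have hn : 0 < n := by
    rcases Nat.eq_zero_or_pos n with rfl | h
    · exact absurd (by simp) hD
    · exact h
  have hn' : (0 : ℝ) < n := by exact_mod_cast hn
  have hC' : (3 : ℝ) ≤ C.card := by exact_mod_cast hC
  have hlog : 0 < Real.log C.card := Real.log_pos (by linarith)
  have hmpos : 0 < m := Nat.ceil_pos.2 (by positivity)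
  have hm' : (0 : ℝ) < m := by exact_mod_cast hmpos
  have hle : Real.log C.card ≤ m * α ^ 2 := by
    have := Nat.le_ceil (Real.log (C.card : ℝ) / α ^ 2)
    rw [← hm, div_le_iff₀ (by positivity)] at this
    exact this
  let g : (X → Bool) → Fin n → ℝ := fun φ j => if φ (d j) = true then 1 else 0
  let p : (X → Bool) → ℝ := fun φ => (∑ k, g φ k) / n
  let A : (X → Bool) → Finset (Fin m → Fin n) := fun φ => Finset.univ.filter (fun f =>
      α * m < ∑ i, (g φ (f i) - (∑ k, g φ k) / n))
  let B : (X → Bool) → Finset (Fin m → Fin n) := fun φ => Finset.univ.filter (fun f =>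
      α * m < ∑ i, (-g φ (f i) - (∑ k, -g φ k) / n))
  have hA : ∀ φ, ((A φ).card : ℝ) ≤ (n : ℝ) ^ m * Real.exp (-2 * m * α ^ 2) := fun φ =>
    hoeff_count hn (g φ) 0 (fun j => by simp only [g]; split_ifs <;> simp) α hα0
  have hB : ∀ φ, ((B φ).card : ℝ) ≤ (n : ℝ) ^ m * Real.exp (-2 * m * α ^ 2) := fun φ =>
    hoeff_count hn (fun j => -g φ j) (-1)
      (fun j => by simp only [g]; split_ifs <;> simp) α hα0
  have hcard : (C.biUnion (fun φ => A φ ∪ B φ)).card < Fintype.card (Fin m → Fin n) := by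
    have h1 : ((C.biUnion (fun φ => A φ ∪ B φ)).card : ℝ) ≤
        C.card * (2 * ((n : ℝ) ^ m * Real.exp (-2 * m * α ^ 2))) := by
      have : ((C.biUnion (fun φ => A φ ∪ B φ)).card : ℝ) ≤ ∑ φ ∈ C, ((A φ ∪ B φ).card : ℝ) := by
        exact_mod_cast Finset.card_biUnion_le
      refine this.trans ?_
      rw [← nsmul_eq_mul]
      refine Finset.sum_le_card_nsmul _ _ _ fun φ _ => ?_
      have h : ((A φ ∪ B φ).card : ℝ) ≤ (A φ).card + (B φ).card := by
        exact_mod_cast Finset.card_union_le _ _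
      linarith [hA φ, hB φ]
    have h2 : Real.exp (-2 * m * α ^ 2) ≤ ((C.card : ℝ) ^ 2)⁻¹ := by
      rw [← Real.exp_log (show (0 : ℝ) < C.card by linarith), ← Real.exp_nat_mul, ← Real.exp_neg]
      apply Real.exp_le_exp.2
      push_cast
      linarith
    have hpn : (0 : ℝ) < (n : ℝ) ^ m := by positivity
    have h3 : C.card * (2 * ((n : ℝ) ^ m * Real.exp (-2 * m * α ^ 2))) < (n : ℝ) ^ m := by
      calc C.card * (2 * ((n : ℝ) ^ m * Real.exp (-2 * m * α ^ 2)))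
          ≤ C.card * (2 * ((n : ℝ) ^ m * ((C.card : ℝ) ^ 2)⁻¹)) := by gcongr
        _ = (n : ℝ) ^ m * (2 / C.card) := by field_simp
        _ < (n : ℝ) ^ m * 1 := by
            apply mul_lt_mul_of_pos_left _ hpn
            rw [div_lt_one (by linarith)]; linarith
        _ = _ := mul_one _
    have h4 := h1.trans_lt h3
    simp only [Fintype.card_fun, Fintype.card_fin]
    exact_mod_cast h4
  obtain ⟨f, hf⟩ : ∃ f, f ∉ C.biUnion (fun φ => A φ ∪ B φ) := by
    by_contra! h
    rw [Finset.eq_univ_iff_forall.2 h, Finset.card_univ] at hcard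
    exact lt_irrefl _ hcard
  refine ⟨d ∘ f, fun φ hφ => ?_⟩
  have hf' : f ∉ A φ ∪ B φ := fun h => hf (Finset.mem_biUnion.2 ⟨φ, hφ, h⟩)
  rw [Finset.mem_union, not_or] at hf'
  obtain ⟨h1, h2⟩ := hf'
  simp only [A, B, Finset.mem_filter, Finset.mem_univ, true_and, not_lt] at h1 h2
  rw [cquery_map, cquery_map]
  change |(∑ k, g φ k) / n - (∑ i, g φ (f i)) / m| ≤ α
  simp only [Finset.sum_sub_distrib, Finset.sum_neg_distrib, Finset.sum_const, Finset.card_univ,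
    Fintype.card_fin, nsmul_eq_mul, neg_div] at h1 h2
  have h5 : (∑ i, g φ (f i)) = m * ((∑ i, g φ (f i)) / m) := by field_simp
  generalize (∑ i, g φ (f i)) / m = q at *
  generalize (∑ k, g φ k) / n = r at *
  rw [h5] at h1 h2
  rw [abs_le]
  constructor
  · have : (m : ℝ) * (q - r) ≤ m * α := by linarith
    have := le_of_mul_le_mul_left this hm'
    linarith
  · have : (m : ℝ) * (r - q) ≤ m * α := by linarith
    have := le_of_mul_le_mul_left this hm'
    linarith

theorem stmt1 {X : Type*} [Fintype X] (C : Finset (X → Bool)) (hC : 3 ≤ C.card)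
    (α : ℝ) (hα0 : 0 < α) (hα1 : α < 1) :
    -- the set of all databases of size `m = ⌈ln|C| / α²⌉` is an α-net for C
    (∀ D : Multiset X, D ≠ 0 →
      ∃ D' : Multiset X, D'.card = ⌈Real.log (C.card : ℝ) / α ^ 2⌉₊ ∧
        ∀ φ ∈ C, |cquery φ D - cquery φ D'| ≤ α) ∧
    -- consequently the minimum cardinality of an α-net is at most |X| ^ m
    (∃ N : Finset (Multiset X), (∀ D' ∈ N, D' ≠ 0) ∧
      (∀ D : Multiset X, D ≠ 0 → ∃ D' ∈ N, ∀ φ ∈ C, |cquery φ D - cquery φ D'| ≤ α) ∧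
      N.card ≤ Fintype.card X ^ ⌈Real.log (C.card : ℝ) / α ^ 2⌉₊) := by
  refine ⟨fun D hD => ?_, ?_⟩
  · obtain ⟨f, hf⟩ := exists_sample C hC α hα0 D hD
    exact ⟨_, by simp, hf⟩
  · refine ⟨Finset.univ.image (fun f : Fin ⌈Real.log (C.card : ℝ) / α ^ 2⌉₊ → X =>
      Multiset.map f Finset.univ.val), ?_, ?_, ?_⟩
    · intro D' hD'
      obtain ⟨f, -, rfl⟩ := Finset.mem_image.1 hD'
      have hC' : (3 : ℝ) ≤ C.card := by exact_mod_cast hC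
      have hlog : 0 < Real.log C.card := Real.log_pos (by linarith)
      have hmpos : 0 < ⌈Real.log (C.card : ℝ) / α ^ 2⌉₊ := Nat.ceil_pos.2 (by positivity)
      rw [← Multiset.card_pos]
      simpa using hmpos
    · intro D hD
      obtain ⟨f, hf⟩ := exists_sample C hC α hα0 D hD
      exact ⟨_, Finset.mem_image_of_mem _ (Finset.mem_univ f), hf⟩
    · refine Finset.card_image_le.trans (le_of_eq ?_)
      simp
end

section
/- There is a universal constant c > 0 such that for every finite domain X, every class C of counting queries over X whose class of defining predicates has VC-dimension k ≥ 1, and every α with 0 < α < 1/2, the minimum cardinality N_α(C) of an α-net for C satisfies N_α(C) ≤ |X|^{⌈c · k · ln(1/α) / α²⌉}. -/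
attribute [local instance] Classical.propDecidable

/-- A class of predicates `P` shatters a finite set `S` if every subset of `S` is picked out
by some predicate in `P`. -/
def Shatters {X : Type*} (P : Set (X → Bool)) (S : Finset X) : Prop :=
  ∀ T ⊆ S, ∃ φ ∈ P, ∀ x ∈ S, (φ x = true ↔ x ∈ T)

/-- Sauer–Shelah for traces of a class of predicates. -/
lemma sauer_trace {X ι : Type*} [Fintype ι] (P : Set (X → Bool)) (k : ℕ)
    (hk : ∀ S : Finset X, Shatters P S → S.card ≤ k) (w : ι → X) (F : Finset (ι → Bool))
    (hF : ∀ f ∈ F, ∃ φ ∈ P, f = φ ∘ w) :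
    F.card ≤ ∑ i ∈ Finset.range (k + 1), (Fintype.card ι).choose i := by
  classical
  let e : (ι → Bool) → Finset ι := fun f => Finset.univ.filter (fun i => f i = true)
  have he : Function.Injective e := by
    intro f g h
    funext i
    have h1 : i ∈ e f ↔ i ∈ e g := by rw [h]
    simp only [e, Finset.mem_filter, Finset.mem_univ, true_and] at h1
    exact Bool.eq_iff_iff.2 h1
  have hsh : ∀ s : Finset ι, (F.image e).Shatters s → s.card ≤ k := by
    intro s hs
    have hsep : ∀ t ⊆ s, ∃ φ ∈ P, ∀ i ∈ s, (φ (w i) = true ↔ i ∈ t) := by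
      intro t ht
      obtain ⟨u, hu, hut⟩ := hs ht
      obtain ⟨f, hf, rfl⟩ := Finset.mem_image.1 hu
      obtain ⟨φ, hφ, rfl⟩ := hF f hf
      refine ⟨φ, hφ, fun i hi => ?_⟩
      rw [← hut]
      simp [e, hi]
    have hinj : Set.InjOn w s := by
      intro i hi j hj hij
      obtain ⟨φ, -, h⟩ := hsep {i} (by simpa using hi)
      have h1 := (h i hi).2 (by simp)
      rw [hij] at h1
      have := (h j hj).1 h1
      exact (Finset.mem_singleton.1 this).symm
    have hc : (s.image w).card = s.card := Finset.card_image_of_injOn hinj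
    rw [← hc]
    apply hk
    intro T hT
    obtain ⟨φ, hφ, h⟩ := hsep (s.filter (fun i => w i ∈ T)) (Finset.filter_subset _ _)
    refine ⟨φ, hφ, fun x hx => ?_⟩
    obtain ⟨i, hi, rfl⟩ := Finset.mem_image.1 hx
    rw [h i hi]
    simp [hi]
  have hv : (F.image e).vcDim ≤ k := Finset.sup_le fun s hs => hsh s (Finset.mem_shatterer.1 hs)
  calc F.card = (F.image e).card := (Finset.card_image_of_injective _ he).symm
    _ ≤ _ := Finset.card_le_card_shatterer _
    _ ≤ _ := Finset.card_shatterer_le_sum_vcDim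
    _ ≤ _ := by
      apply Finset.sum_le_sum_of_subset
      intro i hi
      simp only [Finset.mem_Iic, Finset.mem_range] at *
      omega

/-- Swap the coordinates of a pair of sequences selected by `σ`. -/
def swp {m : ℕ} {Y : Type*} (σ : Fin m → Bool) (p : (Fin m → Y) × (Fin m → Y)) :
    (Fin m → Y) × (Fin m → Y) :=
  (fun i => bif σ i then p.2 i else p.1 i, fun i => bif σ i then p.1 i else p.2 i)

lemma swp_invol {m : ℕ} {Y : Type*} (σ : Fin m → Bool) :
    Function.Involutive (swp (Y := Y) σ) := by
  intro p
  ext i <;> cases h : σ i <;> simp [swp, h]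

/-- Indicator of a Boolean. -/
def bb (c : Bool) : ℝ := bif c then 1 else 0

/-- The difference of the counts. -/
def sdiff2 {m : ℕ} (p : (Fin m → Bool) × (Fin m → Bool)) : ℝ :=
  ∑ i, (bb (p.2 i) - bb (p.1 i))

lemma sdiff2_swp {m : ℕ} (σ : Fin m → Bool) (p : (Fin m → Bool) × (Fin m → Bool)) :
    sdiff2 (swp σ p) = ∑ i, (bif σ i then -1 else 1) * (bb (p.2 i) - bb (p.1 i)) := by
  unfold sdiff2
  refine Finset.sum_congr rfl fun i _ => ?_
  cases h : σ i <;> simp [swp, h]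

lemma sum_exp_swp {m : ℕ} (l : ℝ) (p : (Fin m → Bool) × (Fin m → Bool)) :
    ∑ σ : Fin m → Bool, Real.exp (l * sdiff2 (swp σ p)) ≤ 2 ^ m * Real.exp (l ^ 2 * m / 2) := by
  have h1 : ∀ σ : Fin m → Bool, Real.exp (l * sdiff2 (swp σ p)) =
      ∏ i, Real.exp (l * ((bif σ i then -1 else 1) * (bb (p.2 i) - bb (p.1 i)))) := by
    intro σ
    rw [sdiff2_swp, Finset.mul_sum, Real.exp_sum]
  have h2 : ∑ σ : Fin m → Bool, Real.exp (l * sdiff2 (swp σ p)) =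
      ∏ i : Fin m, ∑ c : Bool, Real.exp (l * ((bif c then -1 else 1) * (bb (p.2 i) - bb (p.1 i)))) := by
    simp_rw [h1]
    rw [Finset.prod_univ_sum, Fintype.piFinset_univ]
  rw [h2]
  calc _ ≤ ∏ i : Fin m, (2 * Real.exp (l ^ 2 / 2)) := by
        apply Finset.prod_le_prod
        · intro i _
          positivity
        · intro i _
          have h3 := Real.cosh_le_exp_half_sq (l * (bb (p.2 i) - bb (p.1 i)))
          have h4 : Real.exp ((l * (bb (p.2 i) - bb (p.1 i))) ^ 2 / 2) ≤ Real.exp (l ^ 2 / 2) := by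
            apply Real.exp_le_exp.2
            cases p.2 i <;> cases p.1 i <;> simp [bb] <;> positivity
          rw [Real.cosh_eq] at h3
          simp only [Fintype.sum_bool, cond_true, cond_false, one_mul, neg_mul, mul_neg]
          linarith
    _ = _ := by
        rw [Finset.prod_const, Finset.card_univ, Fintype.card_fin, mul_pow, ← Real.exp_nat_mul]
        congr 2
        ring

lemma jensen_exp {J : Type*} [Fintype J] (z : J → ℝ) (a : ℝ)
    (h : ∑ j, z j = Fintype.card J * a) :
    Fintype.card J * Real.exp a ≤ ∑ j, Real.exp (z j) := by
  have h1 : ∀ j, Real.exp a * (1 + (z j - a)) ≤ Real.exp (z j) := by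
    intro j
    have := Real.add_one_le_exp (z j - a)
    calc _ ≤ Real.exp a * Real.exp (z j - a) := by gcongr; linarith
      _ = _ := by rw [← Real.exp_add]; congr 1; ring
  calc (Fintype.card J : ℝ) * Real.exp a = ∑ j, Real.exp a * (1 + (z j - a)) := by
        rw [← Finset.mul_sum, Finset.sum_add_distrib, Finset.sum_sub_distrib, h]
        simp
        ring
    _ ≤ _ := Finset.sum_le_sum fun j _ => h1 j

/-- The set of traces on a pair of samples. -/
noncomputable def trc {Y : Type*} {m : ℕ} (Q : Finset (Y → Bool))
    (p : (Fin m → Y) × (Fin m → Y)) : Finset ((Fin m → Bool) × (Fin m → Bool)) :=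
  Q.image (fun φ => (φ ∘ p.1, φ ∘ p.2))

lemma trc_swp {Y : Type*} {m : ℕ} (Q : Finset (Y → Bool)) (σ : Fin m → Bool)
    (p : (Fin m → Y) × (Fin m → Y)) : trc Q (swp σ p) = (trc Q p).image (swp σ) := by
  unfold trc
  rw [Finset.image_image]
  refine Finset.image_congr fun φ _ => ?_
  ext i <;> cases h : σ i <;> simp [swp, h]

/-- Symmetrized exponential sum. -/
noncomputable def HH {Y : Type*} {m : ℕ} (l : ℝ) (Q : Finset (Y → Bool))
    (p : (Fin m → Y) × (Fin m → Y)) : ℝ :=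
  ∑ t ∈ trc Q p, (Real.exp (l * sdiff2 t) + Real.exp (-l * sdiff2 t))

lemma HH_swp {Y : Type*} {m : ℕ} (l : ℝ) (Q : Finset (Y → Bool))
    (p : (Fin m → Y) × (Fin m → Y)) (N : ℕ) (hN : (trc Q p).card ≤ N) :
    ∑ σ : Fin m → Bool, HH l Q (swp σ p) ≤ 2 ^ m * (N * (2 * Real.exp (l ^ 2 * m / 2))) := by
  have h1 : ∀ σ : Fin m → Bool, HH l Q (swp σ p) = ∑ t ∈ trc Q p,
      (Real.exp (l * sdiff2 (swp σ t)) + Real.exp (-l * sdiff2 (swp σ t))) := by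
    intro σ
    unfold HH
    rw [trc_swp, Finset.sum_image]
    exact fun a _ b _ h => (swp_invol σ).injective h
  simp_rw [h1]
  rw [Finset.sum_comm]
  calc _ ≤ ∑ t ∈ trc Q p, 2 ^ m * (2 * Real.exp (l ^ 2 * m / 2)) := by
        refine Finset.sum_le_sum fun t _ => ?_
        rw [Finset.sum_add_distrib]
        have a1 := sum_exp_swp l t
        have a2 := sum_exp_swp (-l) t
        rw [neg_sq] at a2
        linarith
    _ = 2 ^ m * ((trc Q p).card * (2 * Real.exp (l ^ 2 * m / 2))) := by
        rw [Finset.sum_const, nsmul_eq_mul]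
        ring
    _ ≤ _ := by gcongr

lemma sum_HH_le {Y : Type*} [Fintype Y] {m : ℕ} (l : ℝ) (Q : Finset (Y → Bool)) (N : ℕ)
    (hN : ∀ p : (Fin m → Y) × (Fin m → Y), (trc Q p).card ≤ N) :
    ∑ p : (Fin m → Y) × (Fin m → Y), HH l Q p ≤
      (Fintype.card (Fin m → Y) : ℝ) ^ 2 * (N * (2 * Real.exp (l ^ 2 * m / 2))) := by
  have h1 : ∀ σ : Fin m → Bool, ∑ p : (Fin m → Y) × (Fin m → Y), HH l Q (swp σ p) =
      ∑ p : (Fin m → Y) × (Fin m → Y), HH l Q p := fun σ =>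
    Equiv.sum_comp (swp_invol σ).toPerm (HH l Q)
  have h2 : (2 : ℝ) ^ m * ∑ p : (Fin m → Y) × (Fin m → Y), HH l Q p =
      ∑ p : (Fin m → Y) × (Fin m → Y), ∑ σ : Fin m → Bool, HH l Q (swp σ p) := by
    rw [Finset.sum_comm]
    simp_rw [h1]
    simp
  have h3 : ∑ p : (Fin m → Y) × (Fin m → Y), ∑ σ : Fin m → Bool, HH l Q (swp σ p) ≤
      ∑ p : (Fin m → Y) × (Fin m → Y), 2 ^ m * (N * (2 * Real.exp (l ^ 2 * m / 2))) :=
    Finset.sum_le_sum fun p _ => HH_swp l Q p N (hN p)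
  rw [← h2, Finset.sum_const, Finset.card_univ, Fintype.card_prod, nsmul_eq_mul, Nat.cast_mul] at h3
  have h4 : (0 : ℝ) < 2 ^ m := by positivity
  refine le_of_mul_le_mul_left ?_ h4
  linarith

lemma sum_eval {Y : Type*} [Fintype Y] [Nonempty Y] {m : ℕ} (f : Y → ℝ) (i : Fin m) :
    ∑ y : Fin m → Y, f (y i) = Fintype.card (Fin m → Y) * ((∑ y, f y) / Fintype.card Y) := by
  classical
  have h := Fintype.sum_piFinset_apply f (Finset.univ : Finset Y) i
  rw [Fintype.piFinset_univ] at h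
  rw [h]
  have hY : (Fintype.card Y : ℝ) ≠ 0 := by simp
  have hm : m - 1 + 1 = m := by have := i.2; omega
  simp only [Fintype.card_fun, Fintype.card_fin, Finset.card_univ, nsmul_eq_mul]
  push_cast
  have hp : (Fintype.card Y : ℝ) ^ m = (Fintype.card Y : ℝ) ^ (m - 1) * Fintype.card Y := by
    rw [← pow_succ, hm]
  rw [hp]
  field_simp

lemma exists_sample_s2 {Y : Type*} [Fintype Y] [Nonempty Y] {m : ℕ} (hm : 0 < m)
    (Q : Finset (Y → Bool)) (N : ℕ) (a : ℝ) (ha : 0 < a)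
    (hN : ∀ p : (Fin m → Y) × (Fin m → Y), (trc Q p).card ≤ N)
    (hnum : N * (2 * Real.exp (a ^ 2 * m / 2)) ≤ Real.exp (a ^ 2 * m)) :
    ∃ x : Fin m → Y, ∀ φ ∈ Q,
      |(∑ y, bb (φ y)) / Fintype.card Y - (∑ i, bb (φ (x i))) / m| ≤ a := by
  by_contra hcon
  push Not at hcon
  have hm' : (0 : ℝ) < m := by exact_mod_cast hm
  have hM : (0 : ℝ) < Fintype.card (Fin m → Y) := by exact_mod_cast Fintype.card_pos
  have key : ∀ x : Fin m → Y, (Fintype.card (Fin m → Y) : ℝ) * Real.exp (a ^ 2 * m) <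
      ∑ y : Fin m → Y, HH a Q (x, y) := by
    intro x
    obtain ⟨φ, hφ, hx⟩ := hcon x
    set d : ℝ := m * ((∑ y, bb (φ y)) / Fintype.card Y) - ∑ i, bb (φ (x i)) with hd
    have hda : a * m < |d| := by
      have : d = m * ((∑ y, bb (φ y)) / Fintype.card Y - (∑ i, bb (φ (x i))) / m) := by
        rw [hd]; field_simp
      rw [this, abs_mul, abs_of_pos hm', mul_comm]
      gcongr
    have hs : ∑ y : Fin m → Y, sdiff2 (φ ∘ x, φ ∘ y) = Fintype.card (Fin m → Y) * d := by
      unfold sdiff2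
      simp only [Finset.sum_sub_distrib, Function.comp]
      rw [Finset.sum_comm]
      simp_rw [sum_eval (fun y => bb (φ y))]
      rw [Finset.sum_const, Finset.sum_const, Finset.card_univ, Finset.card_univ, Fintype.card_fin, hd]
      simp only [nsmul_eq_mul]
      ring
    have j1 := jensen_exp (fun y : Fin m → Y => a * sdiff2 (φ ∘ x, φ ∘ y)) (a * d)
      (by rw [← Finset.mul_sum, hs]; ring)
    have j2 := jensen_exp (fun y : Fin m → Y => -a * sdiff2 (φ ∘ x, φ ∘ y)) (-a * d)
      (by rw [← Finset.mul_sum, hs]; ring)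
    have j3 : Real.exp (a ^ 2 * m) < Real.exp (a * d) + Real.exp (-a * d) := by
      have e1 := Real.exp_pos (a * d)
      have e2 := Real.exp_pos (-a * d)
      rcases lt_abs.1 hda with h | h
      · have : Real.exp (a ^ 2 * m) < Real.exp (a * d) := Real.exp_lt_exp.2 (by nlinarith)
        linarith
      · have : Real.exp (a ^ 2 * m) < Real.exp (-a * d) := Real.exp_lt_exp.2 (by nlinarith)
        linarith
    have j4 : ∀ y : Fin m → Y, Real.exp (a * sdiff2 (φ ∘ x, φ ∘ y)) +
        Real.exp (-a * sdiff2 (φ ∘ x, φ ∘ y)) ≤ HH a Q (x, y) := by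
      intro y
      unfold HH
      exact Finset.single_le_sum
        (f := fun t => Real.exp (a * sdiff2 t) + Real.exp (-a * sdiff2 t))
        (fun t _ => by positivity) (Finset.mem_image.2 ⟨φ, hφ, rfl⟩)
    calc _ < (Fintype.card (Fin m → Y) : ℝ) * (Real.exp (a * d) + Real.exp (-a * d)) := by gcongr
      _ ≤ ∑ y : Fin m → Y, (Real.exp (a * sdiff2 (φ ∘ x, φ ∘ y)) +
        Real.exp (-a * sdiff2 (φ ∘ x, φ ∘ y))) := by
          rw [Finset.sum_add_distrib, mul_add]
          exact add_le_add j1 j2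
      _ ≤ _ := Finset.sum_le_sum fun y _ => j4 y
  have h1 := sum_HH_le a Q N hN
  rw [Fintype.sum_prod_type] at h1
  have h2 : ∑ x : Fin m → Y, (Fintype.card (Fin m → Y) : ℝ) * Real.exp (a ^ 2 * m) <
      ∑ x : Fin m → Y, ∑ y : Fin m → Y, HH a Q (x, y) :=
    Finset.sum_lt_sum_of_nonempty Finset.univ_nonempty fun x _ => key x
  rw [Finset.sum_const, Finset.card_univ, nsmul_eq_mul] at h2
  have h3 := mul_le_mul_of_nonneg_left hnum (sq_nonneg (Fintype.card (Fin m → Y) : ℝ))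
  nlinarith

lemma numeric (k m : ℕ) (hk : 1 ≤ k) (a : ℝ) (ha : 0 < a) (ha2 : a < 1 / 2)
    (hm : 24 * k * Real.log (1 / a) / a ^ 2 ≤ m) :
    ((∑ i ∈ Finset.range (k + 1), (m + m).choose i : ℕ) : ℝ) * (2 * Real.exp (a ^ 2 * m / 2)) ≤
      Real.exp (a ^ 2 * m) := by
  set L := Real.log (1 / a) with hL
  have hk' : (1 : ℝ) ≤ k := by exact_mod_cast hk
  have hLe : Real.exp L = 1 / a := Real.exp_log (by positivity)
  have h2L : Real.log 2 ≤ L := by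
    apply Real.log_le_log (by norm_num)
    rw [le_div_iff₀ ha]; linarith
  have h2e : 2 ≤ Real.exp L := by
    rw [hLe, le_div_iff₀ ha]; linarith
  have hL0 : 0 < L := lt_of_lt_of_le (Real.log_pos (by norm_num)) h2L
  set t : ℝ := a ^ 2 / 8 with ht
  have ht0 : 0 < t := by positivity
  have ht1 : t ≤ 1 := by rw [ht]; nlinarith
  have hA : ((∑ i ∈ Finset.range (k + 1), (m + m).choose i : ℕ) : ℝ) * t ^ k ≤
      (1 + t) ^ (m + m) := by
    push_cast
    rw [Finset.sum_mul]
    calc _ ≤ ∑ i ∈ Finset.range (k + 1), ((m + m).choose i : ℝ) * t ^ i := by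
          refine Finset.sum_le_sum fun i hi => ?_
          have : i ≤ k := by have := Finset.mem_range.1 hi; omega
          gcongr ?_ * ?_
          exact pow_le_pow_of_le_one ht0.le ht1 this
      _ ≤ ∑ i ∈ Finset.range (max (k + 1) (m + m + 1)), ((m + m).choose i : ℝ) * t ^ i := by
          refine Finset.sum_le_sum_of_subset_of_nonneg ?_ fun i _ _ => by positivity
          intro i; simp only [Finset.mem_range]; omega
      _ = ∑ i ∈ Finset.range (m + m + 1), ((m + m).choose i : ℝ) * t ^ i := by
          symm
          refine Finset.sum_subset (by intro i; simp only [Finset.mem_range]; omega) ?_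
          intro i _ hi
          have : m + m < i := by simp only [Finset.mem_range] at hi; omega
          simp [Nat.choose_eq_zero_of_lt this]
      _ = _ := by
          rw [add_comm 1 t, add_pow]
          refine Finset.sum_congr rfl fun i _ => ?_
          simp [mul_comm]
  have hB : (1 + t) ^ (m + m) ≤ Real.exp (a ^ 2 * m / 4) := by
    calc _ ≤ Real.exp t ^ (m + m) := by
          gcongr
          linarith [Real.add_one_le_exp t]
      _ = _ := by
          rw [← Real.exp_nat_mul]
          congr 1
          rw [ht]; push_cast; ring
  have hC : 1 ≤ t ^ k * Real.exp (5 * k * L) := by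
    have h5 : Real.exp (5 * k * L) = (Real.exp L ^ 5) ^ k := by
      rw [← Real.exp_nat_mul, ← Real.exp_nat_mul]
      congr 1; push_cast; ring
    rw [h5, ← mul_pow]
    apply one_le_pow₀
    have : t * Real.exp L ^ 5 = Real.exp L ^ 3 / 8 := by
      rw [hLe, ht]; field_simp
    rw [this]
    have : (2 : ℝ) ^ 3 ≤ Real.exp L ^ 3 := by gcongr
    linarith
  set S : ℝ := ((∑ i ∈ Finset.range (k + 1), (m + m).choose i : ℕ) : ℝ) with hS
  have hS0 : 0 ≤ S := Nat.cast_nonneg _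
  have hD : 24 * k * L ≤ a ^ 2 * m := by
    rw [div_le_iff₀ (by positivity)] at hm; linarith
  calc S * (2 * Real.exp (a ^ 2 * m / 2))
      ≤ (S * (t ^ k * Real.exp (5 * k * L))) * (Real.exp (k * L) * Real.exp (a ^ 2 * m / 2)) := by
        gcongr
        · exact le_mul_of_one_le_right hS0 hC
        · refine h2e.trans (Real.exp_le_exp.2 ?_)
          nlinarith
    _ = (S * t ^ k) * Real.exp (5 * k * L) * (Real.exp (k * L) * Real.exp (a ^ 2 * m / 2)) := by ring
    _ ≤ Real.exp (a ^ 2 * m / 4) * Real.exp (5 * k * L) *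
          (Real.exp (k * L) * Real.exp (a ^ 2 * m / 2)) := by
        gcongr
        exact hA.trans hB
    _ = Real.exp (a ^ 2 * m / 4 + 5 * k * L + (k * L + a ^ 2 * m / 2)) := by
        simp only [Real.exp_add]
    _ ≤ _ := Real.exp_le_exp.2 (by linarith)

lemma cquery_map_s2 {X ι : Type*} [Fintype ι] (φ : X → Bool) (d : ι → X) :
    cquery φ ((Finset.univ : Finset ι).val.map d) = (∑ i, bb (φ (d i))) / Fintype.card ι := by
  unfold cquery
  congr 1
  · rw [Multiset.filter_map, Multiset.card_map]
    have : ∀ i, bb (φ (d i)) = if φ (d i) = true then 1 else 0 := by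
      intro i; cases φ (d i) <;> simp [bb]
    simp_rw [this]
    rw [Finset.sum_boole]
    rfl
  · simp

lemma exists_enum {X : Type*} (D : Multiset X) :
    ∃ d : Fin D.card → X, (Finset.univ : Finset (Fin D.card)).val.map d = D := by
  obtain ⟨l, rfl⟩ : ∃ l : List X, (l : Multiset X) = D := ⟨D.toList, D.coe_toList⟩
  have h : (Finset.univ : Finset (Fin l.length)).val.map (fun i => l.get i) = (l : Multiset X) := by
    have : (Finset.univ : Finset (Fin l.length)).val = (List.finRange l.length : Multiset _) := rfl
    rw [this, Multiset.map_coe, List.map_get_finRange]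
  exact ⟨fun i => l.get i, h⟩

theorem stmt2 :
    ∃ c : ℝ, 0 < c ∧
      ∀ (X : Type) [Fintype X] (P : Set (X → Bool)) (k : ℕ), 1 ≤ k →
        (∃ S : Finset X, S.card = k ∧ Shatters P S) →
        (∀ S : Finset X, Shatters P S → S.card ≤ k) →
        ∀ α : ℝ, 0 < α → α < 1 / 2 →
          ∃ N : Finset (Multiset X), (∀ D' ∈ N, D' ≠ 0) ∧
            (∀ D : Multiset X, D ≠ 0 →
              ∃ D' ∈ N, ∀ φ ∈ P, |cquery φ D - cquery φ D'| ≤ α) ∧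
            N.card ≤ Fintype.card X ^ ⌈c * k * Real.log (1 / α) / α ^ 2⌉₊ := by
  refine ⟨24, by norm_num, ?_⟩
  intro X _ P k hk _ hvc α hα hα2
  set m := ⌈24 * k * Real.log (1 / α) / α ^ 2⌉₊ with hm
  have hL : 0 < Real.log (1 / α) := Real.log_pos (by rw [lt_div_iff₀ hα]; linarith)
  have hk' : (0 : ℝ) < k := by exact_mod_cast hk
  have hm0 : 0 < m := Nat.ceil_pos.2 (by positivity)
  have hmle : 24 * k * Real.log (1 / α) / α ^ 2 ≤ m := Nat.le_ceil _
  refine ⟨(Finset.univ : Finset (Fin m → X)).image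
    (fun x => (Finset.univ : Finset (Fin m)).val.map x), ?_, ?_, ?_⟩
  · intro D' hD'
    obtain ⟨x, -, rfl⟩ := Finset.mem_image.1 hD'
    intro h
    have := congrArg Multiset.card h
    simp at this
    omega
  · intro D hD
    obtain ⟨d, hd⟩ := exists_enum D
    have hne : Nonempty (Fin D.card) := ⟨⟨0, Multiset.card_pos.2 hD⟩⟩
    let Q : Finset (Fin D.card → Bool) := Finset.univ.filter (fun f => ∃ φ ∈ P, f = φ ∘ d)
    obtain ⟨x, hx⟩ := exists_sample_s2 hm0 Q
      (∑ i ∈ Finset.range (k + 1), (m + m).choose i) α hα (by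
        intro p
        have h1 := sauer_trace P k hvc (d ∘ Sum.elim p.1 p.2)
          (Q.image (fun f => f ∘ Sum.elim p.1 p.2)) (by
            intro f hf
            obtain ⟨g, hg, rfl⟩ := Finset.mem_image.1 hf
            obtain ⟨φ, hφ, rfl⟩ := (Finset.mem_filter.1 hg).2
            exact ⟨φ, hφ, rfl⟩)
        rw [Fintype.card_sum, Fintype.card_fin] at h1
        refine le_trans ?_ h1
        have h2 : trc Q p = (Q.image (fun f => f ∘ Sum.elim p.1 p.2)).image
            (fun f => (f ∘ Sum.inl, f ∘ Sum.inr)) := by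
          rw [Finset.image_image]
          rfl
        rw [h2]
        exact Finset.card_image_le) (numeric k m hk α hα hα2 hmle)
    refine ⟨_, Finset.mem_image.2 ⟨d ∘ x, Finset.mem_univ _, rfl⟩, ?_⟩
    intro φ hφ
    have h3 := hx (φ ∘ d) (Finset.mem_filter.2 ⟨Finset.mem_univ _, φ, hφ, rfl⟩)
    have h4 := cquery_map_s2 φ d
    rw [hd] at h4
    rw [h4, cquery_map_s2, Fintype.card_fin m]
    exact h3
  · refine Finset.card_image_le.trans ?_
    simp
end

section
/- Let C be a finite class of real-valued queries on databases of size n over a domain X, each with global sensitivity at most Δ (i.e., |Q(D) − Q(D'')| ≤ Δ whenever D and D'' are neighbors), and let N be a finite α-net for C. The Net mechanism on input D outputs D' ∈ N with probability proportional to exp(ε · q(D,D') / (2Δ)), where q(D,D') = −max_{Q∈C} |Q(D) − Q(D')|. If α ≥ (2Δ/ε) · ln(|N| / δ), then for every database D of size n, with probability at least 1 − δ the output D' satisfies max_{Q∈C} |Q(D) − Q(D')| ≤ 2α; i.e., the Net mechanism is (2α, δ)-useful for C. -/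
attribute [local instance] Classical.propDecidable

/-- Two databases (multisets) are neighbors if one is obtained from the other by replacing
a single element. -/
def Neighbor {X : Type*} (D D' : Multiset X) : Prop :=
  ∃ (D₀ : Multiset X) (x y : X), D = x ::ₘ D₀ ∧ D' = y ::ₘ D₀

theorem stmt3 {X : Type*} (n : ℕ) (hn : 1 ≤ n)
    (C : Finset ((Multiset X) → ℝ)) (hC : C.Nonempty)
    (Δ ε δ α : ℝ) (hΔ : 0 < Δ) (hε : 0 < ε) (hδ : 0 < δ) (hα : 0 < α)
    -- every query in C has global sensitivity at most Δ
    (hsens : ∀ Q ∈ C, ∀ D D'' : Multiset X,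
      D.card = n → D''.card = n → Neighbor D D'' → |Q D - Q D''| ≤ Δ)
    -- N is an α-net for C
    (N : Finset (Multiset X))
    (hnet : ∀ D : Multiset X, D ≠ 0 →
      ∃ D' ∈ N, (C.sup' hC fun Q => |Q D - Q D'|) ≤ α)
    (hαbig : α ≥ 2 * Δ / ε * Real.log ((N.card : ℝ) / δ)) :
    -- the Net mechanism, which outputs `D' ∈ N` with probability proportional to
    -- `exp (ε q(D,D') / (2Δ))` where `q(D,D') = - max_{Q ∈ C} |Q D - Q D'|`,
    -- outputs with probability at least `1 - δ` some `D'` with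
    -- `max_{Q ∈ C} |Q D - Q D'| ≤ 2α`
    ∀ D : Multiset X, D.card = n →
      (1 - δ) * ∑ D' ∈ N, Real.exp (ε * (-(C.sup' hC fun Q => |Q D - Q D'|)) / (2 * Δ)) ≤
        ∑ D' ∈ N.filter (fun D' => (C.sup' hC fun Q => |Q D - Q D'|) ≤ 2 * α),
          Real.exp (ε * (-(C.sup' hC fun Q => |Q D - Q D'|)) / (2 * Δ)) := by
  intro D hD
  have hD0 : D ≠ 0 := by
    rintro rfl
    simp at hD
    omega
  obtain ⟨D₁, hD₁, hle⟩ := hnet D hD0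
  set f : Multiset X → ℝ := fun D' => C.sup' hC fun Q => |Q D - Q D'| with hf
  have hle' : f D₁ ≤ α := hle
  change (1 - δ) * ∑ D' ∈ N, Real.exp (ε * (-(f D')) / (2 * Δ)) ≤
    ∑ D' ∈ N.filter (fun D' => f D' ≤ 2 * α), Real.exp (ε * (-(f D')) / (2 * Δ))
  clear_value f
  have hcard : (0 : ℝ) < N.card := by
    exact_mod_cast Finset.card_pos.mpr ⟨D₁, hD₁⟩
  set E := Real.exp (ε * (-α) / (2 * Δ)) with hE
  have hEpos : 0 < E := Real.exp_pos _
  have hNE : N.card * E ≤ δ := by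
    have h1 : Real.log ((N.card : ℝ) / δ) ≤ ε * α / (2 * Δ) := by
      rw [le_div_iff₀ (by positivity)]
      have h2 := mul_le_mul_of_nonneg_left hαbig hε.le
      have h3 : ε * (2 * Δ / ε * Real.log ((N.card : ℝ) / δ))
          = Real.log ((N.card : ℝ) / δ) * (2 * Δ) := by
        field_simp
      linarith
    rw [Real.log_le_iff_le_exp (by positivity), div_le_iff₀ hδ] at h1
    have h4 : Real.exp (ε * α / (2 * Δ)) * E = 1 := by
      rw [hE, ← Real.exp_add, ← Real.exp_zero]
      congr 1
      ring
    calc N.card * E ≤ (Real.exp (ε * α / (2 * Δ)) * δ) * E :=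
          mul_le_mul_of_nonneg_right h1 hEpos.le
      _ = (Real.exp (ε * α / (2 * Δ)) * E) * δ := by ring
      _ = δ := by rw [h4, one_mul]
  have hZ : E ≤ ∑ D' ∈ N, Real.exp (ε * (-(f D')) / (2 * Δ)) := by
    refine le_trans ?_ (Finset.single_le_sum
      (f := fun D' => Real.exp (ε * (-(f D')) / (2 * Δ)))
      (fun i _ => (Real.exp_pos _).le) hD₁)
    apply Real.exp_le_exp.mpr
    gcongr
  have hbad : ∑ D' ∈ N.filter (fun D' => ¬ f D' ≤ 2 * α), Real.exp (ε * (-(f D')) / (2 * Δ))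
      ≤ N.card * (E * E) := by
    have h5 : ∀ D' ∈ N.filter (fun D' => ¬ f D' ≤ 2 * α),
        Real.exp (ε * (-(f D')) / (2 * Δ)) ≤ E * E := by
      intro D' hD'
      have h6 := (Finset.mem_filter.mp hD').2
      push Not at h6
      rw [hE, ← Real.exp_add, ← add_div]
      apply Real.exp_le_exp.mpr
      gcongr
      nlinarith
    refine (Finset.sum_le_card_nsmul _ _ _ h5).trans ?_
    rw [nsmul_eq_mul]
    gcongr
    exact Finset.filter_subset _ _
  have hsplit := Finset.sum_filter_add_sum_filter_not N (fun D' => f D' ≤ 2 * α)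
    (fun D' => Real.exp (ε * (-(f D')) / (2 * Δ)))
  have h7 : N.card * (E * E) ≤ δ * ∑ D' ∈ N, Real.exp (ε * (-(f D')) / (2 * Δ)) := by
    rw [← mul_assoc]
    exact mul_le_mul hNE hZ hEpos.le hδ.le
  linarith
end

section
/- Let C be a finite class of counting queries over a domain X, and let N be a finite α-net for C. The Net mechanism on input a database D of size n outputs D' ∈ N with probability proportional to exp(ε n · q(D,D') / 2), where q(D,D') = −max_{Q∈C} |Q(D) − Q(D')|. If α ≥ (2/(ε n)) · ln(|N| / δ), then for every database D of size n, with probability at least 1 − δ the output D' satisfies max_{Q∈C} |Q(D) − Q(D')| ≤ 2α. -/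
attribute [local instance] Classical.propDecidable

theorem stmt4 {X : Type*} (n : ℕ) (hn : 1 ≤ n)
    (C : Finset (X → Bool)) (hC : C.Nonempty)
    (ε δ α : ℝ) (hε : 0 < ε) (hδ : 0 < δ) (hα : 0 < α)
    -- N is an α-net for C
    (N : Finset (Multiset X))
    (hnet : ∀ D : Multiset X, D ≠ 0 →
      ∃ D' ∈ N, (C.sup' hC fun φ => |cquery φ D - cquery φ D'|) ≤ α)
    (hαbig : α ≥ 2 / (ε * n) * Real.log ((N.card : ℝ) / δ)) :
    -- the Net mechanism, which outputs `D' ∈ N` with probability proportional to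
    -- `exp (ε n q(D,D') / 2)` where `q(D,D') = - max_{φ ∈ C} |Q_φ D - Q_φ D'|`,
    -- outputs with probability at least `1 - δ` some `D'` with
    -- `max_{φ ∈ C} |Q_φ D - Q_φ D'| ≤ 2α`
    ∀ D : Multiset X, D.card = n →
      (1 - δ) * ∑ D' ∈ N,
          Real.exp (ε * n * (-(C.sup' hC fun φ => |cquery φ D - cquery φ D'|)) / 2) ≤
        ∑ D' ∈ N.filter
            (fun D' => (C.sup' hC fun φ => |cquery φ D - cquery φ D'|) ≤ 2 * α),
          Real.exp (ε * n * (-(C.sup' hC fun φ => |cquery φ D - cquery φ D'|)) / 2) := by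
  intro D hD
  have hn0 : (0:ℝ) < n := by exact_mod_cast hn
  have hD0 : D ≠ 0 := by
    rintro rfl
    simp at hD
    omega
  obtain ⟨D₀, hD₀, hle⟩ := hnet D hD0
  set f : Multiset X → ℝ := fun D' => C.sup' hC fun φ => |cquery φ D - cquery φ D'| with hf
  change f D₀ ≤ α at hle
  change (1 - δ) * ∑ D' ∈ N, Real.exp (ε * n * (-(f D')) / 2) ≤
    ∑ D' ∈ N.filter (fun D' => f D' ≤ 2 * α), Real.exp (ε * n * (-(f D')) / 2)
  have hsplit := Finset.sum_filter_add_sum_filter_not N (fun D' => f D' ≤ 2 * α)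
    (fun D' => Real.exp (ε * n * (-(f D')) / 2))
  have hpos : 0 < ε * n := mul_pos hε hn0
  have htot : Real.exp (-(ε * n * α / 2)) ≤ ∑ D' ∈ N, Real.exp (ε * n * (-(f D')) / 2) := by
    refine le_trans ?_ (Finset.single_le_sum
      (f := fun D' => Real.exp (ε * n * (-(f D')) / 2)) (fun _ _ => (Real.exp_pos _).le) hD₀)
    apply Real.exp_le_exp.mpr
    nlinarith [mul_le_mul_of_nonneg_left hle hpos.le]
  have hNpos : (0:ℝ) < N.card := by exact_mod_cast Finset.card_pos.mpr ⟨D₀, hD₀⟩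
  have hN : (N.card : ℝ) ≤ δ * Real.exp (ε * n * α / 2) := by
    have h1 : Real.log ((N.card : ℝ) / δ) ≤ ε * n * α / 2 := by
      have h2 := mul_le_mul_of_nonneg_left hαbig hpos.le
      have h3 : ε * n * (2 / (ε * n) * Real.log ((N.card : ℝ) / δ)) =
          2 * Real.log ((N.card : ℝ) / δ) := by
        field_simp
      linarith
    have h4 := (Real.log_le_iff_le_exp (div_pos hNpos hδ)).mp h1
    rw [div_le_iff₀ hδ] at h4
    linarith
  have hbad : ∑ D' ∈ N.filter (fun D' => ¬ f D' ≤ 2 * α), Real.exp (ε * n * (-(f D')) / 2)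
      ≤ N.card * Real.exp (-(ε * n * α)) := by
    calc _ ≤ ∑ D' ∈ N.filter (fun D' => ¬ f D' ≤ 2 * α), Real.exp (-(ε * n * α)) := by
          apply Finset.sum_le_sum
          intro D' h
          have h := (Finset.mem_filter.mp h).2
          apply Real.exp_le_exp.mpr
          nlinarith [mul_le_mul_of_nonneg_left (not_le.mp h).le hpos.le]
      _ ≤ _ := by
          rw [Finset.sum_const, nsmul_eq_mul]
          apply mul_le_mul_of_nonneg_right _ (Real.exp_pos _).le
          exact_mod_cast Finset.card_filter_le _ _
  have hfin : (N.card : ℝ) * Real.exp (-(ε * n * α)) ≤ δ * Real.exp (-(ε * n * α / 2)) := by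
    calc _ ≤ δ * Real.exp (ε * n * α / 2) * Real.exp (-(ε * n * α)) :=
          mul_le_mul_of_nonneg_right hN (Real.exp_pos _).le
      _ = _ := by
          rw [mul_assoc, ← Real.exp_add]
          congr 2
          ring
  have h5 := mul_le_mul_of_nonneg_left htot hδ.le
  linarith
end

section
/- Let R be a finite nonempty set, X a domain, and q a quality function assigning to each size-n database D over X and each r ∈ R a real number q(D,r), such that |q(D,r) − q(D'',r)| ≤ Δ for all r ∈ R whenever D and D'' are neighboring size-n databases. Then the exponential mechanism, which on input D outputs r ∈ R with probability proportional to exp(ε · q(D,r) / (2Δ)), is ε-differentially private. -/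
attribute [local instance] Classical.propDecidable

theorem stmt5 {X R : Type*} [Fintype R] [Nonempty R] (n : ℕ) (hn : 1 ≤ n)
    (q : Multiset X → R → ℝ) (Δ ε : ℝ) (hΔ : 0 < Δ) (hε : 0 < ε)
    -- q has sensitivity at most Δ in its database argument
    (hsens : ∀ D D'' : Multiset X, D.card = n → D''.card = n → Neighbor D D'' →
      ∀ r : R, |q D r - q D'' r| ≤ Δ) :
    -- the exponential mechanism, which outputs `r ∈ R` with probability proportional to
    -- `exp (ε q(D,r) / (2Δ))`, is ε-differentially private
    ∀ D D'' : Multiset X, D.card = n → D''.card = n → Neighbor D D'' →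
      ∀ S : Finset R,
        (∑ r ∈ S, Real.exp (ε * q D r / (2 * Δ))) /
            (∑ r : R, Real.exp (ε * q D r / (2 * Δ))) ≤
          Real.exp ε *
            ((∑ r ∈ S, Real.exp (ε * q D'' r / (2 * Δ))) /
              (∑ r : R, Real.exp (ε * q D'' r / (2 * Δ)))) := by
  intro D D'' hD hD'' hN S
  have key : ∀ a b : ℝ, |a - b| ≤ Δ →
      Real.exp (ε * a / (2 * Δ)) ≤ Real.exp (ε / 2) * Real.exp (ε * b / (2 * Δ)) := by
    intro a b hab
    rw [← Real.exp_add, Real.exp_le_exp]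
    have h1 : a ≤ Δ + b := by linarith [(abs_le.mp hab).2]
    have h2 : ε / 2 + ε * b / (2 * Δ) = ε * (Δ + b) / (2 * Δ) := by
      field_simp
    rw [h2]
    gcongr
  have hs := hsens D D'' hD hD'' hN
  have hnum : (∑ r ∈ S, Real.exp (ε * q D r / (2 * Δ))) ≤
      Real.exp (ε / 2) * ∑ r ∈ S, Real.exp (ε * q D'' r / (2 * Δ)) := by
    rw [Finset.mul_sum]
    exact Finset.sum_le_sum fun r _ => key _ _ (hs r)
  have hden : (∑ r : R, Real.exp (ε * q D'' r / (2 * Δ))) ≤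
      Real.exp (ε / 2) * ∑ r : R, Real.exp (ε * q D r / (2 * Δ)) := by
    rw [Finset.mul_sum]
    exact Finset.sum_le_sum fun r _ => key _ _ (by rw [abs_sub_comm]; exact hs r)
  have hp : ∀ E : Multiset X, 0 < ∑ r : R, Real.exp (ε * q E r / (2 * Δ)) := fun E =>
    Finset.sum_pos (fun r _ => Real.exp_pos _) Finset.univ_nonempty
  have hee : Real.exp ε = Real.exp (ε / 2) * Real.exp (ε / 2) := by
    rw [← Real.exp_add, add_halves]
  have hS : 0 ≤ ∑ r ∈ S, Real.exp (ε * q D'' r / (2 * Δ)) :=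
    Finset.sum_nonneg fun r _ => (Real.exp_pos _).le
  rw [← mul_div_assoc, div_le_div_iff₀ (hp D) (hp D''), hee]
  refine (mul_le_mul hnum hden (hp D'').le (mul_nonneg (Real.exp_pos _).le hS)).trans
    (le_of_eq (by ring))
end

section
/- For every finite domain X, every finite class C of counting queries over X with |C| ≥ 3, every ε > 0, every δ ∈ (0,1), every α ∈ (0,1), and every n such that α ≥ (2/(ε n)) · (⌈ln|C| / α²⌉ · ln|X| + ln(1/δ)), there exists an ε-differentially private mechanism mapping size-n databases over X to databases over X of size ⌈ln|C| / α²⌉ that is (2α, δ)-useful for C. -/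
attribute [local instance] Classical.propDecidable

open MeasureTheory ProbabilityTheory

noncomputable def expPMF {T : Type*} [Fintype T] [Nonempty T] (u : T → ℝ) : PMF T :=
  PMF.ofFintype (fun t => ENNReal.ofReal (Real.exp (-u t) / ∑ s, Real.exp (-u s))) (by
    rw [← ENNReal.ofReal_sum_of_nonneg (fun t _ => by positivity), ← Finset.sum_div, div_self,
      ENNReal.ofReal_one]
    exact (Finset.sum_pos (fun t _ => Real.exp_pos _) Finset.univ_nonempty).ne')

lemma expPMF_apply {T : Type*} [Fintype T] [Nonempty T] (u : T → ℝ) (t : T) :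
    expPMF u t = ENNReal.ofReal (Real.exp (-u t) / ∑ s, Real.exp (-u s)) := rfl

lemma expPMF_dp {T : Type*} [Fintype T] [Nonempty T] (u v : T → ℝ) (c : ℝ)
    (h : ∀ t, |u t - v t| ≤ c / 2) (t : T) :
    expPMF u t ≤ ENNReal.ofReal (Real.exp c) * expPMF v t := by
  rw [expPMF_apply, expPMF_apply, ← ENNReal.ofReal_mul (Real.exp_pos _).le]
  apply ENNReal.ofReal_le_ofReal
  have hu : 0 < ∑ s, Real.exp (-u s) :=
    Finset.sum_pos (fun t _ => Real.exp_pos _) Finset.univ_nonempty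
  have hv : 0 < ∑ s, Real.exp (-v s) :=
    Finset.sum_pos (fun t _ => Real.exp_pos _) Finset.univ_nonempty
  have h1 : Real.exp (-u t) ≤ Real.exp (c / 2) * Real.exp (-v t) := by
    rw [← Real.exp_add, Real.exp_le_exp]
    linarith [abs_le.1 (h t)]
  have h2 : ∑ s, Real.exp (-v s) ≤ Real.exp (c / 2) * ∑ s, Real.exp (-u s) := by
    rw [Finset.mul_sum]
    apply Finset.sum_le_sum
    intro s _
    rw [← Real.exp_add, Real.exp_le_exp]
    linarith [abs_le.1 (h s)]
  have h3 : Real.exp c = Real.exp (c / 2) * Real.exp (c / 2) := by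
    rw [← Real.exp_add]; ring_nf
  rw [← mul_div_assoc, div_le_div_iff₀ hu hv, h3]
  calc _ ≤ (Real.exp (c / 2) * Real.exp (-v t)) * (Real.exp (c / 2) * ∑ s, Real.exp (-u s)) := by
        gcongr
    _ = _ := by ring

lemma expPMF_tail {T : Type*} [Fintype T] [Nonempty T] (u : T → ℝ) (a b δ : ℝ)
    (h : ∃ t, u t ≤ a) (hδ : (Fintype.card T : ℝ) * Real.exp (a - b) ≤ δ) :
    1 - ENNReal.ofReal δ ≤ (expPMF u).toOuterMeasure {t | u t ≤ b} := by
  obtain ⟨t0, ht0⟩ := h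
  have hu : 0 < ∑ s, Real.exp (-u s) :=
    Finset.sum_pos (fun t _ => Real.exp_pos _) Finset.univ_nonempty
  have hZ : Real.exp (-a) ≤ ∑ s, Real.exp (-u s) := by
    calc _ ≤ Real.exp (-u t0) := by rw [Real.exp_le_exp]; linarith
      _ ≤ _ := Finset.single_le_sum (f := fun s => Real.exp (-u s))
        (fun s _ => (Real.exp_pos _).le) (Finset.mem_univ t0)
  have hb : (expPMF u).toOuterMeasure {t | u t ≤ b}ᶜ ≤ ENNReal.ofReal δ := by
    rw [PMF.toOuterMeasure_apply_fintype]
    calc _ ≤ ∑ t : T, ENNReal.ofReal (Real.exp (a - b)) := by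
          apply Finset.sum_le_sum
          intro t _
          rw [Set.indicator_apply]
          split_ifs with ht
          · rw [expPMF_apply]
            apply ENNReal.ofReal_le_ofReal
            rw [div_le_iff₀ hu]
            have ht' : b < u t := by simpa using ht
            calc Real.exp (-u t) ≤ Real.exp (a - b) * Real.exp (-a) := by
                  rw [← Real.exp_add, Real.exp_le_exp]; linarith
              _ ≤ _ := by gcongr
          · exact zero_le
      _ = ENNReal.ofReal (Fintype.card T * Real.exp (a - b)) := by
          rw [Finset.sum_const, Finset.card_univ, nsmul_eq_mul,
            ENNReal.ofReal_mul (by positivity), ENNReal.ofReal_natCast]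
      _ ≤ _ := ENNReal.ofReal_le_ofReal hδ
  have h1 : (1 : ENNReal) ≤ (expPMF u).toOuterMeasure {t | u t ≤ b} + 
      (expPMF u).toOuterMeasure {t | u t ≤ b}ᶜ := by
    have : (expPMF u).toOuterMeasure Set.univ = 1 := by
      rw [PMF.toOuterMeasure_apply_eq_one_iff]; exact Set.subset_univ _
    rw [← this, ← Set.union_compl_self {t | u t ≤ b}]
    exact measure_union_le _ _
  rw [tsub_le_iff_right]
  exact h1.trans (by gcongr)

lemma cquery_sens {X : Type*} (φ : X → Bool) (D D' : Multiset X) (n : ℕ)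
    (hD : D.card = n) (hD' : D'.card = n) (h : Neighbor D D') :
    |cquery φ D - cquery φ D'| ≤ 1 / n := by
  obtain ⟨D₀, x, y, rfl, rfl⟩ := h
  unfold cquery
  rw [hD, hD', ← sub_div, abs_div, Nat.abs_cast]
  gcongr
  simp only [Multiset.filter_cons]
  split_ifs <;> simp [abs_le]

lemma integral_ind {X : Type*} [Fintype X] [MeasurableSpace X] [MeasurableSingletonClass X]
    (φ : X → Bool) (D : Multiset X) (hD : D ≠ 0) :
    ∫ x, (if φ x = true then (1 : ℝ) else 0) ∂(PMF.ofMultiset D hD).toMeasure = cquery φ D := by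
  rw [PMF.integral_eq_sum]
  unfold cquery
  have h : ((D.filter (fun x => φ x = true)).card : ℝ) =
      ∑ x : X, ((D.filter (fun x => φ x = true)).count x : ℝ) := by
    rw [← Nat.cast_sum]
    congr 1
    exact (Multiset.sum_count_eq_card (fun a _ => Finset.mem_univ a)).symm
  rw [h, Finset.sum_div]
  apply Finset.sum_congr rfl
  intro x _
  rw [PMF.ofMultiset_apply, ENNReal.toReal_div, Multiset.count_filter]
  split_ifs <;> simp

/-- The database listed by a tuple. -/
def tupDb {X : Type*} {m : ℕ} (f : Fin m → X) : Multiset X := Finset.univ.val.map f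

lemma tupDb_card {X : Type*} {m : ℕ} (f : Fin m → X) : (tupDb f).card = m := by
  simp [tupDb]

lemma cquery_tupDb {X : Type*} {m : ℕ} (f : Fin m → X) (φ : X → Bool) :
    cquery φ (tupDb f) = (∑ i, (if φ (f i) = true then (1 : ℝ) else 0)) / m := by
  unfold cquery
  rw [tupDb_card]
  congr 1
  rw [← Multiset.countP_eq_card_filter]
  unfold tupDb
  rw [Multiset.countP_map, Finset.sum_boole]
  rfl

lemma hoeff {X : Type*} [Fintype X] [MeasurableSpace X] [MeasurableSingletonClass X]
    (φ : X → Bool) (D : Multiset X) (hD : D ≠ 0) (m : ℕ) (hm : 1 ≤ m) (α : ℝ) (hα : 0 < α) :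
    (Measure.pi (fun _ : Fin m => (PMF.ofMultiset D hD).toMeasure)).real
      {f | α ≤ |cquery φ (tupDb f) - cquery φ D|} ≤ 2 * Real.exp (-2 * m * α ^ 2) := by
  set ν := (PMF.ofMultiset D hD).toMeasure with hν
  set P := Measure.pi (fun _ : Fin m => ν) with hP
  let g : X → ℝ := fun x => if φ x = true then (1 : ℝ) else 0
  have hg : Measurable g := measurable_of_finite g
  have hgi : ∫ x, g x ∂ν = cquery φ D := integral_ind φ D hD
  have hm0 : (0 : ℝ) < m := by exact_mod_cast hm
  have hsub : ∀ i : Fin m, HasSubgaussianMGF (fun f : Fin m → X => g (f i) - cquery φ D)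
      ((‖(1 : ℝ) - 0‖₊ / 2) ^ 2) P := by
    intro i
    have hmi : Measurable (fun f : Fin m → X => g (f i)) := hg.comp (measurable_pi_apply i)
    have := hasSubgaussianMGF_of_mem_Icc (μ := P) (a := 0) (b := 1)
      (X := fun f : Fin m → X => g (f i)) hmi.aemeasurable
      (Filter.Eventually.of_forall fun f => by
        simp only [g]; split_ifs <;> simp)
    have hint : ∫ f, g (f i) ∂P = cquery φ D := by
      rw [← hgi]
      exact integral_comp_eval (μ := fun _ : Fin m => ν) (i := i) hg.aestronglyMeasurable
    rwa [hint] at this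
  have hind : iIndepFun (fun (i : Fin m) (f : Fin m → X) => g (f i) - cquery φ D) P :=
    iIndepFun_pi (X := fun _ x => g x - cquery φ D) (fun i => (hg.sub_const _).aemeasurable)
  have hind2 : iIndepFun (fun (i : Fin m) (f : Fin m → X) => -(g (f i) - cquery φ D)) P :=
    iIndepFun_pi (X := fun _ x => -(g x - cquery φ D)) (fun i => (hg.sub_const _).neg.aemeasurable)
  have h1 := HasSubgaussianMGF.measure_sum_ge_le_of_iIndepFun hind
    (s := Finset.univ) (fun i _ => hsub i) (ε := m * α) (by positivity)
  have h2 := HasSubgaussianMGF.measure_sum_ge_le_of_iIndepFun hind2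
    (s := Finset.univ) (fun i _ => (hsub i).neg) (ε := m * α) (by positivity)
  have he : -((m : ℝ) * α) ^ 2 / (2 * ((∑ i : Fin m, (‖(1 : ℝ) - 0‖₊ / 2) ^ 2 : NNReal) : ℝ)) =
      -2 * m * α ^ 2 := by
    simp
    field_simp
  push_cast at h1 h2 he
  rw [he] at h1 h2
  have hs : {f : Fin m → X | α ≤ |cquery φ (tupDb f) - cquery φ D|} ⊆
      {f | (m : ℝ) * α ≤ ∑ i, (g (f i) - cquery φ D)} ∪
      {f | (m : ℝ) * α ≤ ∑ i, -(g (f i) - cquery φ D)} := by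
    intro f hf
    have hq : ∑ i, (g (f i) - cquery φ D) = m * (cquery φ (tupDb f) - cquery φ D) := by
      rw [cquery_tupDb, Finset.sum_sub_distrib]
      simp only [g, Finset.sum_const, Finset.card_univ, Fintype.card_fin, nsmul_eq_mul]
      field_simp
    simp only [Set.mem_union, Set.mem_setOf_eq, Finset.sum_neg_distrib, hq] at hf ⊢
    rcases le_abs.1 hf with h | h
    · left; gcongr
    · right; rw [← mul_neg]; gcongr
  calc _ ≤ P.real _ := measureReal_mono hs
    _ ≤ _ := measureReal_union_le _ _
    _ ≤ _ := by linarith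

lemma exists_good {X : Type*} [Fintype X] (C : Finset (X → Bool)) (hC : 3 ≤ C.card)
    (D : Multiset X) (hD : D ≠ 0) (m : ℕ) (hm : 1 ≤ m) (α : ℝ) (hα : 0 < α)
    (h : Real.log C.card ≤ m * α ^ 2) :
    ∃ f : Fin m → X, ∀ φ ∈ C, |cquery φ (tupDb f) - cquery φ D| ≤ α := by
  letI : MeasurableSpace X := ⊤
  by_contra! hcon
  set P := Measure.pi (fun _ : Fin m => (PMF.ofMultiset D hD).toMeasure) with hP
  have hC0 : (3 : ℝ) ≤ C.card := by exact_mod_cast hC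
  have hcov : (Set.univ : Set (Fin m → X)) ⊆
      ⋃ φ ∈ C, {f | α ≤ |cquery φ (tupDb f) - cquery φ D|} := by
    intro f _
    obtain ⟨φ, hφ, hlt⟩ := hcon f
    simp only [Set.mem_iUnion]
    exact ⟨φ, hφ, hlt.le⟩
  have h1 : (1 : ℝ) ≤ ∑ φ ∈ C, 2 * Real.exp (-2 * m * α ^ 2) := by
    calc (1 : ℝ) = P.real Set.univ := by simp
      _ ≤ P.real _ := measureReal_mono hcov (measure_ne_top _ _)
      _ ≤ ∑ φ ∈ C, P.real {f | α ≤ |cquery φ (tupDb f) - cquery φ D|} :=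
        measureReal_biUnion_finset_le _ _
      _ ≤ _ := Finset.sum_le_sum fun φ _ => hoeff φ D hD m hm α hα
  rw [Finset.sum_const, nsmul_eq_mul] at h1
  have h2 : Real.exp (-2 * m * α ^ 2) ≤ ((C.card : ℝ) ^ 2)⁻¹ := by
    rw [← Real.exp_log (show (0 : ℝ) < ((C.card : ℝ) ^ 2)⁻¹ by positivity), Real.exp_le_exp,
      Real.log_inv, Real.log_pow]
    push_cast
    linarith
  have h3 : (C.card : ℝ) * (2 * Real.exp (-2 * m * α ^ 2)) ≤ 2 / C.card := by
    calc _ ≤ (C.card : ℝ) * (2 * ((C.card : ℝ) ^ 2)⁻¹) := by gcongr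
      _ = _ := by field_simp
  have h4 : (2 : ℝ) / C.card < 1 := by
    rw [div_lt_one (by linarith)]; linarith
  linarith

/-- Worst-case error over the class. -/
noncomputable def werr {X : Type*} (C : Finset (X → Bool)) (hC : C.Nonempty) (D D' : Multiset X) : ℝ :=
  C.sup' hC (fun φ => |cquery φ D' - cquery φ D|)

lemma werr_sens {X : Type*} (C : Finset (X → Bool)) (hC : C.Nonempty) (D D'' D' : Multiset X)
    (c : ℝ) (h : ∀ φ, |cquery φ D - cquery φ D''| ≤ c) :
    werr C hC D D' ≤ werr C hC D'' D' + c := by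
  unfold werr
  rw [Finset.sup'_le_iff]
  intro φ hφ
  have h1 := Finset.le_sup' (fun φ => |cquery φ D' - cquery φ D''|) hφ
  have h2 := h φ
  have h3 := abs_sub_le (cquery φ D') (cquery φ D'') (cquery φ D)
  rw [abs_sub_comm] at h2
  linarith

theorem stmt6 {X : Type*} [Fintype X] [Nonempty X]
    (C : Finset (X → Bool)) (hC : 3 ≤ C.card)
    (ε δ α : ℝ) (hε : 0 < ε) (hδ0 : 0 < δ) (hδ1 : δ < 1) (hα0 : 0 < α) (hα1 : α < 1)
    (n : ℕ) (hn : 1 ≤ n)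
    (hbig : α ≥ 2 / (ε * n) *
      ((⌈Real.log (C.card : ℝ) / α ^ 2⌉₊ : ℝ) * Real.log (Fintype.card X : ℝ) +
        Real.log (1 / δ))) :
    ∃ M : Multiset X → PMF (Multiset X),
      -- M is ε-differentially private
      (∀ D D'' : Multiset X, D.card = n → D''.card = n → Neighbor D D'' →
        ∀ E : Set (Multiset X),
          (M D).toOuterMeasure E ≤ ENNReal.ofReal (Real.exp ε) * (M D'').toOuterMeasure E) ∧
      -- M outputs databases of size ⌈ln|C| / α²⌉
      (∀ D : Multiset X, ∀ D' ∈ (M D).support,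
        D'.card = ⌈Real.log (C.card : ℝ) / α ^ 2⌉₊) ∧
      -- M is (2α, δ)-useful for C
      (∀ D : Multiset X, D.card = n →
        1 - ENNReal.ofReal δ ≤
          (M D).toOuterMeasure {D' | ∀ φ ∈ C, |cquery φ D' - cquery φ D| ≤ 2 * α}) := by
  have hCn : C.Nonempty := Finset.card_pos.1 (by omega)
  set m := ⌈Real.log (C.card : ℝ) / α ^ 2⌉₊ with hm
  have hC0 : (3 : ℝ) ≤ C.card := by exact_mod_cast hC
  have hlog : 0 < Real.log (C.card : ℝ) := Real.log_pos (by linarith)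
  have hm1 : 1 ≤ m := Nat.ceil_pos.2 (by positivity)
  have hmα : Real.log (C.card : ℝ) ≤ m * α ^ 2 := by
    rw [← div_le_iff₀ (by positivity)]
    exact Nat.le_ceil _
  have hn0 : (0 : ℝ) < n := by exact_mod_cast hn
  refine ⟨fun D => (expPMF (fun f : Fin m → X => ε * n / 2 * werr C hCn D (tupDb f))).map tupDb,
    ?_, ?_, ?_⟩
  · intro D D'' hD hD'' hN E
    rw [PMF.toOuterMeasure_map_apply, PMF.toOuterMeasure_map_apply,
      PMF.toOuterMeasure_apply_fintype, PMF.toOuterMeasure_apply_fintype, Finset.mul_sum]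
    apply Finset.sum_le_sum
    intro f _
    simp only [Set.indicator_apply]
    split_ifs
    · apply expPMF_dp
      intro t
      have hs : ∀ φ, |cquery φ D - cquery φ D''| ≤ 1 / n := fun φ =>
        cquery_sens φ D D'' n hD hD'' hN
      have a1 := werr_sens C hCn D D'' (tupDb t) _ hs
      have a2 := werr_sens C hCn D'' D (tupDb t) _ (fun φ => by rw [abs_sub_comm]; exact hs φ)
      rw [← mul_sub, abs_mul, abs_of_pos (by positivity)]
      calc _ ≤ ε * n / 2 * (1 / n) := by
            gcongr
            rw [abs_le]; constructor <;> linarith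
        _ = _ := by field_simp
    · simp
  · intro D D' hD'
    rw [PMF.mem_support_map_iff] at hD'
    obtain ⟨f, -, rfl⟩ := hD'
    exact tupDb_card f
  · intro D hD
    have hD0 : D ≠ 0 := by
      rintro rfl
      simp at hD
      omega
    obtain ⟨f, hf⟩ := exists_good C hC D hD0 m hm1 α hα0 hmα
    rw [PMF.toOuterMeasure_map_apply]
    refine (expPMF_tail _ (ε * n / 2 * α) (ε * n / 2 * (2 * α)) δ ⟨f, ?_⟩ ?_).trans
      (measure_mono ?_)
    · gcongr
      exact Finset.sup'_le _ _ hf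
    · have hX : (0 : ℝ) < Fintype.card X := by exact_mod_cast Fintype.card_pos
      have hcard : (Fintype.card (Fin m → X) : ℝ) = Real.exp (m * Real.log (Fintype.card X)) := by
        rw [Real.exp_nat_mul, Real.exp_log hX]
        simp
      rw [hcard, ← Real.exp_add, ← Real.le_log_iff_exp_le hδ0]
      rw [one_div, Real.log_inv, ge_iff_le, div_mul_eq_mul_div, div_le_iff₀ (by positivity)] at hbig
      linarith
    · intro t ht φ hφ
      have ht' : werr C hCn D (tupDb t) ≤ 2 * α := by
        have : (0 : ℝ) < ε * n / 2 := by positivity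
        exact le_of_mul_le_mul_left ht this
      exact (Finset.le_sup' (fun φ => |cquery φ (tupDb t) - cquery φ D|) hφ).trans ht'
end

section
/- Let X be a domain, let P be a class of predicates on X that shatters a set S ⊆ X of even cardinality d ≥ 2, and let D_S = {T ⊆ S : |T| = d/2}. For each T ∈ D_S fix a predicate φ_T ∈ P with {x ∈ S : φ_T(x) = 1} = T, and let Q_T be its counting query; let C be a class of counting queries containing all Q_T for T ∈ D_S. Let M be a mechanism mapping size-(d/2) databases over X to databases over X that is (α, δ)-useful for C, where 0 < δ < 1. Then for every T ∈ D_S, with probability at least 1 − δ over D̂ = M(T), the set T' ∈ D_S minimizing v_{T''} = Q_{T''}(T'') − Q_{T''}(D̂) over T'' ∈ D_S satisfies |T Δ T'| ≤ 2dα. -/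
attribute [local instance] Classical.propDecidable

theorem cquery_finset_aux {X : Type*} [DecidableEq X] (S A T : Finset X) (φ : X → Bool)
    (hφ : ∀ x ∈ S, (φ x = true ↔ x ∈ A)) (hT : T ⊆ S) :
    cquery φ T.val = ((T ∩ A).card : ℝ) / (T.card : ℝ) := by
  unfold cquery
  have h : T.filter (fun x => φ x = true) = T ∩ A := by
    ext x
    simp only [Finset.mem_filter, Finset.mem_inter]
    exact ⟨fun h => ⟨h.1, (hφ x (hT h.1)).1 h.2⟩, fun h => ⟨h.1, (hφ x (hT h.1)).2 h.2⟩⟩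
  rw [← h]
  simp only [Finset.card_def, Finset.filter_val]

theorem stmt9 {X : Type*} [DecidableEq X] (P : Set (X → Bool)) (S : Finset X)
    (d : ℕ) (hS : S.card = d) (hd : 2 ≤ d) (hde : Even d)
    (hshatter : Shatters P S)
    -- for each `T ∈ D_S` a fixed predicate `φc T ∈ P` picking out exactly `T` inside `S`
    (φc : Finset X → (X → Bool))
    (hφc : ∀ T ⊆ S, T.card = d / 2 →
      φc T ∈ P ∧ ∀ x ∈ S, (φc T x = true ↔ x ∈ T))
    -- a class C of counting queries containing all the Q_T
    (C : Set (X → Bool)) (hPC : ∀ T ⊆ S, T.card = d / 2 → φc T ∈ C)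
    (M : Multiset X → PMF (Multiset X)) (α δ : ℝ) (hδ0 : 0 < δ) (hδ1 : δ < 1)
    -- M is (α, δ)-useful for C on size-(d/2) databases
    (huseful : ∀ D : Multiset X, D.card = d / 2 →
      1 - ENNReal.ofReal δ ≤
        (M D).toOuterMeasure {Dhat | ∀ ψ ∈ C, |cquery ψ Dhat - cquery ψ D| ≤ α}) :
    ∀ T ⊆ S, T.card = d / 2 →
      1 - ENNReal.ofReal δ ≤
        (M T.val).toOuterMeasure
          {Dhat | ∀ T' ⊆ S, T'.card = d / 2 →
            (∀ T'' ⊆ S, T''.card = d / 2 →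
              cquery (φc T') T'.val - cquery (φc T') Dhat ≤
                cquery (φc T'') T''.val - cquery (φc T'') Dhat) →
            ((symmDiff T T').card : ℝ) ≤ 2 * d * α} := by
  intro T hT hTc
  refine (huseful T.val (by simpa using hTc)).trans ?_
  apply MeasureTheory.measure_mono
  intro Dhat hD T' hT' hTc' hmin
  have h1 := hmin T hT hTc
  have h2 := hD (φc T) (hPC T hT hTc)
  have h3 := hD (φc T') (hPC T' hT' hTc')
  rw [cquery_finset_aux S T' T' _ (hφc T' hT' hTc').2 hT',
    cquery_finset_aux S T T _ (hφc T hT hTc).2 hT] at h1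
  rw [cquery_finset_aux S T T _ (hφc T hT hTc).2 hT] at h2
  rw [cquery_finset_aux S T' T _ (hφc T' hT' hTc').2 hT] at h3
  have e1 : T ∩ T = T := Finset.inter_self T
  have e2 : T' ∩ T' = T' := Finset.inter_self T'
  rw [e1, e2, hTc, hTc'] at h1
  rw [e1, hTc] at h2
  rw [hTc] at h3
  have hc : (symmDiff T T').card + 2 * (T ∩ T').card = d := by
    have a : symmDiff T T' = (T \ T') ∪ (T' \ T) := by
      ext; simp [Finset.mem_symmDiff]
    have hdisj : Disjoint (T \ T') (T' \ T) := disjoint_sdiff_sdiff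
    rw [a, Finset.card_union_of_disjoint hdisj]
    have b1 := Finset.card_sdiff_add_card_inter T T'
    have b2 := Finset.card_sdiff_add_card_inter T' T
    rw [Finset.inter_comm T' T] at b2
    have := Nat.div_two_mul_two_of_even hde
    omega
  have hn : ((d / 2 : ℕ) : ℝ) * 2 = d := by
    exact_mod_cast Nat.div_two_mul_two_of_even hde
  have hpos : (0 : ℝ) < ((d / 2 : ℕ) : ℝ) := by
    have : 0 < d / 2 := by omega
    exact_mod_cast this
  have hcR : ((symmDiff T T').card : ℝ) + 2 * ((T ∩ T').card : ℝ) = d := by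
    exact_mod_cast hc
  rw [div_self hpos.ne'] at h1 h2
  have h4 : 1 - 2 * α ≤ ((T ∩ T').card : ℝ) / ((d / 2 : ℕ) : ℝ) := by
    have := abs_le.mp h2
    have := abs_le.mp h3
    linarith
  rw [le_div_iff₀ hpos] at h4
  rw [← hn] at hcR ⊢
  linarith
end

section
/- There is a universal constant c > 0 with the following property: for every integer d ≥ 1, every ε > 0, every α ∈ (0,1), every δ ∈ (0,1), and every n ≥ (c · d / (ε α)) · ln(d / (δ α)), there exists an ε-differentially private mechanism mapping size-n databases over the domain {1, 2, …, 2^d} to databases over {1, 2, …, 2^d} that is (α, δ)-useful for the class of all interval queries Q_{[a,b]} with 1 ≤ a ≤ b ≤ 2^d. -/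
attribute [local instance] Classical.propDecidable

/-- The interval query `Q_{[a,b]}`: the fraction of elements `x` of the database (a multiset
of naturals) with `a ≤ x ≤ b`. -/
noncomputable def iquery (a b : ℕ) (D : Multiset ℕ) : ℝ :=
  ((D.filter (fun x => a ≤ x ∧ x ≤ b)).card : ℝ) / (D.card : ℝ)

open Finset

lemma sum_prod_fun {V A : Type} [Fintype V] [DecidableEq V] [Fintype A] (f : V → A → ℝ) :
    ∑ ω : V → A, ∏ v, f v (ω v) = ∏ v, ∑ a, f v a := by
  rw [Finset.prod_univ_sum, Fintype.piFinset_univ]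

/-- product distribution -/
noncomputable def pp {V A : Type} [Fintype V] (q : ℕ → A → ℝ) (c : V → ℕ) (ω : V → A) : ℝ :=
  ∏ v, q (c v) (ω v)

lemma pp_sum {V A : Type} [Fintype V] [DecidableEq V] [Fintype A] (q : ℕ → A → ℝ) (c : V → ℕ)
    (h1 : ∀ c, ∑ a, q c a = 1) : ∑ ω, pp q c ω = 1 := by
  unfold pp
  rw [sum_prod_fun (fun v a => q (c v) a)]
  simp [h1]

lemma pp_nonneg {V A : Type} [Fintype V] (q : ℕ → A → ℝ) (c : V → ℕ)
    (h0 : ∀ c a, 0 ≤ q c a) (ω : V → A) : 0 ≤ pp q c ω :=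
  Finset.prod_nonneg fun _ _ => h0 _ _

lemma pp_expect {V A : Type} [Fintype V] [DecidableEq V] [Fintype A] (q : ℕ → A → ℝ) (c : V → ℕ)
    (g : V → A → ℝ) :
    ∑ ω, pp q c ω * ∏ v, g v (ω v) = ∏ v, ∑ a, q (c v) a * g v a := by
  unfold pp
  rw [← sum_prod_fun (fun v a => q (c v) a * g v a)]
  simp [Finset.prod_mul_distrib]

lemma pp_marginal {V A : Type} [Fintype V] [DecidableEq V] [Fintype A] (q : ℕ → A → ℝ) (c : V → ℕ)
    (h1 : ∀ c, ∑ a, q c a = 1) (v : V) (B : A → Prop) [DecidablePred B] :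
    ∑ ω, (if B (ω v) then pp q c ω else 0) = ∑ a, if B a then q (c v) a else 0 := by
  have := pp_expect q c (fun w a => if w = v then (if B a then 1 else 0) else 1)
  have e : ∀ ω : V → A, (∏ w, (if w = v then (if B (ω w) then (1:ℝ) else 0) else 1))
      = if B (ω v) then 1 else 0 := by
    intro ω
    rw [Finset.prod_ite_eq' Finset.univ v]; simp
  simp only [e] at this
  rw [Finset.prod_eq_single v] at this
  · simpa using this
  · intro b _ hb
    simp [hb, h1]
  · simp

lemma pp_dp {L N : ℕ} {A : Type} (q : ℕ → A → ℝ) (κ : ℝ)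
    (h0 : ∀ c a, 0 ≤ q c a)
    (hu : ∀ c a, q (c+1) a ≤ Real.exp κ * q c a) (hd : ∀ c a, q c a ≤ Real.exp κ * q (c+1) a)
    (hκ : 0 ≤ κ)
    (key : ℕ → ℕ → ℕ) (D₀ : Multiset ℕ) (x y : ℕ) (ω : Fin L × Fin N → A) :
    pp q (fun v => (x ::ₘ D₀).countP (fun z => key v.1 z = v.2)) ω ≤
      Real.exp (2 * L * κ) * pp q (fun v => (y ::ₘ D₀).countP (fun z => key v.1 z = v.2)) ω := by
  have key1 : ∀ v : Fin L × Fin N,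
      q ((x ::ₘ D₀).countP (fun z => key v.1 z = v.2)) (ω v) ≤
      Real.exp (κ * ((if key v.1 x = v.2 then 1 else 0) + (if key v.1 y = v.2 then 1 else 0))) *
      q ((y ::ₘ D₀).countP (fun z => key v.1 z = v.2)) (ω v) := by
    intro v
    rw [Multiset.countP_cons, Multiset.countP_cons]
    set c := D₀.countP (fun z => key v.1 z = v.2)
    have e1 : 1 ≤ Real.exp κ := Real.one_le_exp hκ
    split_ifs
    · rw [mul_add, Real.exp_add]; simp only [mul_one]
      have := h0 (c+1) (ω v)
      nlinarith [mul_nonneg (sub_nonneg.2 e1) this, mul_nonneg (mul_nonneg (sub_nonneg.2 e1) this) (Real.exp_pos κ).le]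
    · simpa using hu c (ω v)
    · simpa using hd c (ω v)
    · simp
  have cnt1 : ∀ x : ℕ, ∑ v : Fin L × Fin N, (if key v.1 x = v.2 then (1:ℝ) else 0) ≤ L := by
    intro x
    rw [Fintype.sum_prod_type]
    calc _ ≤ ∑ l : Fin L, (1:ℝ) := by
          apply Finset.sum_le_sum
          intro l _
          by_cases h : key l x < N
          · rw [Finset.sum_eq_single (⟨key l x, h⟩ : Fin N)]
            · simp
            · intro b _ hb
              rw [if_neg]
              intro h'; apply hb; ext; exact h'.symm
            · simp
          · rw [Finset.sum_eq_zero]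
            · simp
            · intro i _
              rw [if_neg]
              have := i.2
              intro h'
              change key l x = (i:ℕ) at h'
              omega
      _ = L := by simp
  unfold pp
  calc _ ≤ ∏ v : Fin L × Fin N, _ := Finset.prod_le_prod (fun _ _ => h0 _ _) (fun v _ => key1 v)
    _ ≤ _ := by
      rw [Finset.prod_mul_distrib, ← Real.exp_sum, ← Finset.mul_sum, Finset.sum_add_distrib]
      apply mul_le_mul_of_nonneg_right _ (Finset.prod_nonneg fun _ _ => h0 _ _)
      apply Real.exp_le_exp.2
      nlinarith [cnt1 x, cnt1 y]

lemma double_count {I : Type} (s : Finset I) (P : I → ℕ → Prop) [∀ i, DecidablePred (P i)] (m : ℕ) (D : Multiset ℕ)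
    (h : ∀ y ∈ D, (s.filter (fun i => P i y)).card ≤ m) :
    ∑ i ∈ s, D.countP (P i) ≤ m * D.card := by
  induction D using Multiset.induction with
  | empty => simp
  | cons a D ih =>
    simp only [Multiset.countP_cons, Finset.sum_add_distrib, Multiset.card_cons]
    have h1 := ih (fun y hy => h y (Multiset.mem_cons_of_mem hy))
    have h2 := h a (Multiset.mem_cons_self a D)
    rw [Finset.card_filter] at h2
    rw [mul_add]; omega

/-! Stage 1 -/
noncomputable def sg (x : ℝ) : ℝ := 1 / (1 + Real.exp (-x))

lemma sg_pos (x : ℝ) : 0 < sg x := by unfold sg; positivity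

lemma sg_add (x : ℝ) : sg x + sg (-x) = 1 := by
  unfold sg
  rw [neg_neg, Real.exp_neg]
  have := Real.exp_pos x
  field_simp
  ring

lemma sg_le (x : ℝ) : sg x ≤ Real.exp x := by
  unfold sg
  rw [div_le_iff₀ (by positivity), mul_add, ← Real.exp_add]
  simp
  positivity

lemma sg_mono (x y : ℝ) (h : x ≤ y) : sg x ≤ sg y := by
  unfold sg
  apply one_div_le_one_div_of_le (by positivity)
  have := Real.exp_le_exp.2 (neg_le_neg h)
  linarith

lemma sg_lip (x η : ℝ) (h : 0 ≤ η) : sg (x + η) ≤ Real.exp η * sg x := by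
  unfold sg
  rw [mul_one_div, div_le_div_iff₀ (by positivity) (by positivity), mul_add (Real.exp η), ← Real.exp_add]
  have : 1 ≤ Real.exp η := Real.one_le_exp h
  have e : η + -(x+η) = -x := by ring
  rw [e]; linarith

noncomputable def q1 (η τ : ℝ) (c : ℕ) (b : Bool) : ℝ :=
  if b = true then sg (η * (c - τ)) else sg (-(η * (c - τ)))

lemma q1_nonneg (η τ : ℝ) (c : ℕ) (b : Bool) : 0 ≤ q1 η τ c b := by
  unfold q1; split_ifs <;> exact (sg_pos _).le

lemma q1_sum (η τ : ℝ) (c : ℕ) : ∑ b, q1 η τ c b = 1 := by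
  simp [q1, sg_add]

lemma q1_up (η τ : ℝ) (h : 0 ≤ η) (c : ℕ) (b : Bool) :
    q1 η τ (c+1) b ≤ Real.exp η * q1 η τ c b := by
  have e1 : 1 ≤ Real.exp η := Real.one_le_exp h
  unfold q1; push_cast; split_ifs
  · have := sg_lip (η * (c - τ)) η h
    convert this using 2; ring
  · have := sg_mono (-(η * (c + 1 - τ))) (-(η * (c - τ))) (by nlinarith)
    nlinarith [sg_pos (-(η * (c - τ)))]

lemma q1_down (η τ : ℝ) (h : 0 ≤ η) (c : ℕ) (b : Bool) :
    q1 η τ c b ≤ Real.exp η * q1 η τ (c+1) b := by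
  have e1 : 1 ≤ Real.exp η := Real.one_le_exp h
  unfold q1; push_cast; split_ifs
  · have := sg_mono ((η * (c - τ))) ((η * (c + 1 - τ))) (by nlinarith)
    nlinarith [sg_pos ((η * (c + 1 - τ)))]
  · have := sg_lip (-(η * (c + 1 - τ))) η h
    convert this using 2; ring

/-- 0-based dyadic count of size 2^(k+1) node. -/
noncomputable def cn (D : Multiset ℕ) (k i : ℕ) : ℕ := D.countP (fun y => (y-1)/2^(k+1) = i)

def flag {d : ℕ} (ω : Fin d × Fin (2^d) → Bool) (k i : ℕ) : Prop :=
  ∃ v : Fin d × Fin (2^d), (v.1 : ℕ) = k ∧ (v.2 : ℕ) = i ∧ ω v = true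

def act (d : ℕ) (F : ℕ → ℕ → Prop) (k i : ℕ) : Prop := ∀ m, k + m < d → F (k+m) (i/2^m)

noncomputable def cuts (d : ℕ) (F : ℕ → ℕ → Prop) : Finset ℕ :=
  (Finset.Ico 1 (2^d)).filter
    (fun s => ∃ k i, k < d ∧ act d F k i ∧ s = (2*i+1)*2^k)

def good (d : ℕ) (θ T : ℝ) (D : Multiset ℕ) (F : ℕ → ℕ → Prop) : Prop :=
  ∀ k i, k < d → i < 2^d → θ ≤ cn D (k+1) (i/2) →
    ((T < cn D k i → F k i) ∧ ((cn D k i : ℝ) < θ → ¬ F k i))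

lemma cn_mono (D : Multiset ℕ) (k i : ℕ) : cn D k i ≤ cn D (k+1) (i/2) := by
  unfold cn
  rw [Multiset.countP_eq_card_filter, Multiset.countP_eq_card_filter]
  apply Multiset.card_le_card
  apply Multiset.monotone_filter_right
  intro y h
  rw [← h, pow_succ _ (k+1), Nat.div_div_eq_div_mul]

lemma cn_root (d : ℕ) (D : Multiset ℕ) (hD : ∀ x ∈ D, 1 ≤ x ∧ x ≤ 2^d) (k : ℕ) (hk : d ≤ k + 1) :
    cn D k 0 = D.card := by
  unfold cn
  rw [Multiset.countP_eq_card]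
  intro y hy
  have := hD y hy
  apply Nat.div_eq_of_lt
  have : 2^d ≤ 2^(k+1) := Nat.pow_le_pow_right (by norm_num) hk
  omega

lemma act_count (d : ℕ) (θ T : ℝ) (D : Multiset ℕ) (F : ℕ → ℕ → Prop)
    (hD : ∀ x ∈ D, 1 ≤ x ∧ x ≤ 2^d) (hθ : θ ≤ D.card) (hG : good d θ T D F) :
    ∀ m k i, k < d → d ≤ k + 1 + m → i * 2^(k+1) < 2^d → act d F k i → θ ≤ cn D k i := by
  intro m
  induction m with
  | zero =>
    intro k i hk hm hi ha
    have hi0 : i = 0 := by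
      by_contra h
      have : 2^d ≤ 2^(k+1) := Nat.pow_le_pow_right (by norm_num) hm
      have : 1 * 2^(k+1) ≤ i * 2^(k+1) := Nat.mul_le_mul_right _ (by omega)
      omega
    subst hi0
    rw [cn_root d D hD k hm]; exact hθ
  | succ m ih =>
    intro k i hk hm hi ha
    have hpar : θ ≤ cn D (k+1) (i/2) := by
      by_cases hk1 : k + 1 < d
      · apply ih (k+1) (i/2) hk1 (by omega)
        · calc i/2 * 2^(k+1+1) = (i/2*2) * 2^(k+1) := by ring
            _ ≤ i * 2^(k+1) := Nat.mul_le_mul_right _ (by omega)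
            _ < _ := hi
        · intro m hm
          have := ha (m+1) (by omega)
          rw [pow_succ', ← Nat.div_div_eq_div_mul] at this
          convert this using 1; ring
      · have hi0 : i = 0 := by
          by_contra h
          have : 2^d ≤ 2^(k+1) := Nat.pow_le_pow_right (by norm_num) (by omega)
          have : 1 * 2^(k+1) ≤ i * 2^(k+1) := Nat.mul_le_mul_right _ (by omega)
          omega
        subst hi0
        rw [Nat.zero_div, cn_root d D hD (k+1) (by omega)]; exact hθ
    by_contra hc
    have hi' : i < 2^d := lt_of_le_of_lt (Nat.le_mul_of_pos_right _ (by positivity)) hi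
    have := (hG k i hk hi' hpar).2 (not_le.1 hc)
    apply this
    simpa using ha 0 (by omega)

lemma cuts_card (d : ℕ) (θ T : ℝ) (D : Multiset ℕ) (F : ℕ → ℕ → Prop)
    (hD : ∀ x ∈ D, 1 ≤ x ∧ x ≤ 2^d) (hθ : θ ≤ D.card) (hG : good d θ T D F) :
    ((cuts d F).card : ℝ) * θ ≤ d * D.card := by
  by_cases hθ0 : θ < 0
  · have h1 : (0:ℝ) ≤ (cuts d F).card := by positivity
    have h2 : (0:ℝ) ≤ d * D.card := by positivity
    nlinarith
  push Not at hθ0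
  set I := ((Finset.range d) ×ˢ (Finset.range (2^d))).filter (fun v => θ ≤ cn D v.1 v.2) with hI
  have hsub : cuts d F ⊆ I.image (fun v => (2*v.2+1)*2^v.1) := by
    intro s hs
    unfold cuts at hs
    rw [Finset.mem_filter, Finset.mem_Ico] at hs
    obtain ⟨⟨hs1, hs2⟩, k, i, hk, ha, rfl⟩ := hs
    rw [Finset.mem_image]
    refine ⟨(k,i), ?_, rfl⟩
    have h3 : i * 2^(k+1) < 2^d := by
      calc i * 2^(k+1) = (2*i) * 2^k := by ring
        _ ≤ (2*i+1) * 2^k := Nat.mul_le_mul_right _ (by omega)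
        _ < _ := hs2
    rw [hI, Finset.mem_filter, Finset.mem_product, Finset.mem_range, Finset.mem_range]
    exact ⟨⟨hk, lt_of_le_of_lt (Nat.le_mul_of_pos_right _ (by positivity)) h3⟩,
      act_count d θ T D F hD hθ hG d k i hk (by omega) h3 ha⟩
  have h1 : (cuts d F).card ≤ I.card := (Finset.card_le_card hsub).trans Finset.card_image_le
  have h2 : (I.card : ℝ) * θ ≤ ∑ v ∈ I, (cn D v.1 v.2 : ℝ) := by
    rw [← nsmul_eq_mul]
    apply Finset.card_nsmul_le_sum
    intro v hv
    exact (Finset.mem_filter.1 hv).2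
  have h3 : ∑ v ∈ I, cn D v.1 v.2 ≤ d * D.card := by
    apply double_count I (fun v y => (y-1)/2^(v.1+1) = v.2)
    intro y _
    calc _ ≤ ((Finset.range d).image (fun k => (k, (y-1)/2^(k+1)))).card := by
          apply Finset.card_le_card
          intro v hv
          rw [Finset.mem_filter] at hv
          rw [Finset.mem_image]
          refine ⟨v.1, ?_, ?_⟩
          · have := (Finset.mem_filter.1 hv.1).1
            exact (Finset.mem_product.1 this).1
          · rw [hv.2]
      _ ≤ d := Finset.card_image_le.trans (by simp)
  have h3' : ∑ v ∈ I, (cn D v.1 v.2 : ℝ) ≤ d * D.card := by exact_mod_cast h3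
  have h1' : ((cuts d F).card : ℝ) ≤ I.card := by exact_mod_cast h1
  nlinarith

lemma gap (d : ℕ) (θ T : ℝ) (D : Multiset ℕ) (F : ℕ → ℕ → Prop)
    (hT0 : 0 ≤ T) (hT : θ ≤ T) (hG : good d θ T D F)
    (x : ℕ) (hx : x < 2^d) :
    ∃ s, s ≤ x ∧ (s = 0 ∨ s ∈ cuts d F) ∧ (D.countP (fun y => s ≤ y - 1 ∧ y - 1 < x) : ℝ) ≤ T := by
  have main : ∀ k, k ≤ d → (∀ m, k + m < d → F (k+m) (x/2^k/2^(m+1))) →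
      (x/2^k*2^k = 0 ∨ x/2^k*2^k ∈ cuts d F) → 
      ∃ s, s ≤ x ∧ (s = 0 ∨ s ∈ cuts d F) ∧
        (D.countP (fun y => s ≤ y - 1 ∧ y - 1 < x) : ℝ) ≤ T := by
    intro k
    induction k with
    | zero =>
      intro _ _ h
      simp only [pow_zero, Nat.div_one, mul_one] at h
      refine ⟨x, le_rfl, h, ?_⟩
      rw [Multiset.countP_eq_zero.2]
      · simpa using hT0
      · intro y _; omega
    | succ k ih =>
      intro hk hF hs
      by_cases hf : F k (x/2^(k+1))
      · have hact : act d F k (x/2^(k+1)) := by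
          intro m hm
          cases m with
          | zero => simpa using hf
          | succ m =>
            have := hF m (by omega)
            convert this using 1; ring
        have e1 : x/2^k/2 = x/2^(k+1) := by rw [pow_succ, Nat.div_div_eq_div_mul]
        apply ih (by omega)
        · intro m hm
          have := hact m hm
          rw [pow_succ', ← Nat.div_div_eq_div_mul, e1]; exact this
        · rcases Nat.even_or_odd' (x/2^k) with ⟨j, hj | hj⟩
          · have : x/2^(k+1) = j := by omega
            rw [this] at hs
            have e : x/2^k * 2^k = j * 2^(k+1) := by rw [hj]; ring
            rw [e]; exact hs
          · right
            have hj' : x/2^(k+1) = j := by omega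
            unfold cuts
            rw [Finset.mem_filter, Finset.mem_Ico]
            refine ⟨⟨?_, ?_⟩, k, j, by omega, ?_, by rw [hj]⟩
            · rw [hj]; exact Nat.one_le_iff_ne_zero.2 (by positivity)
            · exact lt_of_le_of_lt (Nat.div_mul_le_self _ _) hx
            · rw [← hj']; exact hact
      · refine ⟨x/2^(k+1)*2^(k+1), Nat.div_mul_le_self _ _, hs, ?_⟩
        have h1 : D.countP (fun y => x/2^(k+1)*2^(k+1) ≤ y - 1 ∧ y - 1 < x) ≤ cn D k (x/2^(k+1)) := by
          unfold cn
          rw [Multiset.countP_eq_card_filter, Multiset.countP_eq_card_filter]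
          apply Multiset.card_le_card
          apply Multiset.monotone_filter_right
          intro y h
          apply le_antisymm
          · exact Nat.div_le_div_right h.2.le
          · exact (Nat.le_div_iff_mul_le (by positivity)).2 h.1
        have h2 : (cn D k (x/2^(k+1)) : ℝ) ≤ T := by
          by_contra hc
          push Not at hc
          have := cn_mono D k (x/2^(k+1))
          have h3 : (cn D k (x/2^(k+1)) : ℝ) ≤ cn D (k+1) (x/2^(k+1)/2) := by exact_mod_cast this
          exact hf ((hG k _ (by omega) (lt_of_le_of_lt (Nat.div_le_self _ _) hx) (by linarith)).1 hc)
        have h1' : (D.countP (fun y => x/2^(k+1)*2^(k+1) ≤ y - 1 ∧ y - 1 < x) : ℝ) ≤ cn D k (x/2^(k+1)) := by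
          exact_mod_cast h1
        linarith
  apply main d le_rfl
  · intro m hm; omega
  · left; rw [Nat.div_eq_of_lt hx]; simp

lemma stage1_fail (d : ℕ) (η τ s θ T : ℝ) (D : Multiset ℕ)
    (hη : 0 ≤ η) (hθ : 0 < θ) (h1 : θ ≤ τ - s) (h2 : τ + s ≤ T) (hT : θ ≤ T) :
    (∑ ω : Fin d × Fin (2^d) → Bool, if good d θ T D (flag ω) then 0 else
      pp (q1 η τ) (fun v => D.countP (fun z => (z-1)/2^((v.1:ℕ)+1) = (v.2:ℕ))) ω) * θ
      ≤ 2 * d * D.card * Real.exp (-(η * s)) := by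
  set P : (Fin d × Fin (2^d) → Bool) → ℝ :=
    pp (q1 η τ) (fun v => D.countP (fun z => (z-1)/2^((v.1:ℕ)+1) = (v.2:ℕ))) with hP
  have hP0 : ∀ ω, 0 ≤ P ω := fun ω => pp_nonneg _ _ (q1_nonneg η τ) ω
  set R : Finset (Fin d × Fin (2^d)) :=
    Finset.univ.filter (fun v => θ ≤ cn D ((v.1:ℕ)+1) ((v.2:ℕ)/2)) with hR
  let bad : Fin d × Fin (2^d) → Bool → Prop := fun v b =>
    (T < cn D v.1 v.2 ∧ b = false) ∨ ((cn D v.1 v.2 : ℝ) < θ ∧ b = true)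
  have hfl : ∀ (ω : Fin d × Fin (2^d) → Bool) (k : Fin d) (i : Fin (2^d)),
      flag ω k i ↔ ω (k,i) = true := by
    intro ω k i
    constructor
    · rintro ⟨v, hv1, hv2, hv3⟩
      have : v = (k,i) := Prod.ext (Fin.ext hv1) (Fin.ext hv2)
      rw [← this]; exact hv3
    · intro h; exact ⟨(k,i), rfl, rfl, h⟩
  have step1 : ∀ ω, (if good d θ T D (flag ω) then 0 else P ω) ≤
      ∑ v ∈ R, if bad v (ω v) then P ω else 0 := by
    intro ω
    have hnn : ∀ v ∈ R, 0 ≤ if bad v (ω v) then P ω else 0 := by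
      intro v _; split_ifs; exacts [hP0 ω, le_rfl]
    split_ifs with hg
    · exact Finset.sum_nonneg hnn
    · unfold good at hg
      push Not at hg
      obtain ⟨k, i, hk, hi, hpar, hb⟩ := hg
      have hfl' := hfl ω ⟨k,hk⟩ ⟨i,hi⟩
      have hbad : bad (⟨k,hk⟩,⟨i,hi⟩) (ω (⟨k,hk⟩,⟨i,hi⟩)) := by
        by_cases hf : flag ω k i
        · right
          have : ¬ (T < cn D k i ∧ ¬ flag ω k i) := fun h => h.2 hf
          refine ⟨?_, hfl'.1 hf⟩
          by_contra hc
          exact hc (hb (fun _ => hf)).1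
        · left
          refine ⟨?_, ?_⟩
          · by_contra hc
            exact hf ((hb (fun h => absurd h hc)).2)
          · have := mt hfl'.2 hf
            simpa using this
      have hmem : ((⟨k,hk⟩,⟨i,hi⟩) : Fin d × Fin (2^d)) ∈ R := by
        rw [hR, Finset.mem_filter]; exact ⟨Finset.mem_univ _, hpar⟩
      have := Finset.single_le_sum hnn hmem
      rw [if_pos hbad] at this
      exact this
  have step2 : ∀ v, ∑ ω, (if bad v (ω v) then P ω else 0) ≤ Real.exp (-(η*s)) := by
    intro v
    have := pp_marginal (q1 η τ) (fun v : Fin d × Fin (2^d) =>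
      D.countP (fun z => (z-1)/2^((v.1:ℕ)+1) = (v.2:ℕ))) (q1_sum η τ) v (bad v)
    rw [hP, this]
    change ∑ a, (if bad v a then q1 η τ (cn D v.1 v.2) a else 0) ≤ _
    rw [Fintype.sum_bool]
    have hpos := Real.exp_pos (-(η*s))
    by_cases ha : T < cn D v.1 v.2
    · have n1 : ¬ bad v true := by
        rintro (h | h)
        · simp at h
        · linarith [h.1]
      rw [if_neg n1, zero_add]
      split_ifs
      · unfold q1; rw [if_neg (by simp)]
        refine (sg_le _).trans (Real.exp_le_exp.2 ?_)
        nlinarith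
      · exact hpos.le
    · have n1 : ¬ bad v false := by
        rintro (h | h)
        · exact ha h.1
        · simp at h
      rw [if_neg n1, add_zero]
      split_ifs with hb
      · rcases hb with hb | hb
        · simp at hb
        unfold q1; rw [if_pos rfl]
        refine (sg_le _).trans (Real.exp_le_exp.2 ?_)
        nlinarith [hb.1]
      · exact hpos.le
  have step3 : (∑ ω, if good d θ T D (flag ω) then 0 else P ω) ≤ R.card * Real.exp (-(η*s)) := by
    calc _ ≤ ∑ ω, ∑ v ∈ R, (if bad v (ω v) then P ω else 0) := Finset.sum_le_sum fun ω _ => step1 ω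
      _ = ∑ v ∈ R, ∑ ω, (if bad v (ω v) then P ω else 0) := Finset.sum_comm
      _ ≤ ∑ v ∈ R, Real.exp (-(η*s)) := Finset.sum_le_sum fun v _ => step2 v
      _ = _ := by simp
  have step4 : (R.card : ℝ) * θ ≤ 2 * d * D.card := by
    have h2 : (R.card : ℝ) * θ ≤ ∑ v ∈ R, (cn D ((v.1:ℕ)+1) ((v.2:ℕ)/2) : ℝ) := by
      rw [← nsmul_eq_mul]
      apply Finset.card_nsmul_le_sum
      intro v hv
      exact (Finset.mem_filter.1 hv).2
    have h3 : ∑ v ∈ R, cn D ((v.1:ℕ)+1) ((v.2:ℕ)/2) ≤ (2*d) * D.card := by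
      apply double_count R (fun v y => (y-1)/2^((v.1:ℕ)+1+1) = (v.2:ℕ)/2)
      intro y _
      calc _ ≤ ((Finset.univ : Finset (Fin d)) ×ˢ (Finset.range 2)).card := by
            apply Finset.card_le_card_of_injOn (fun v => (v.1, (v.2:ℕ) % 2))
            · intro v hv
              simp only [Finset.coe_product, Set.mem_prod]
              exact ⟨by simp, by simp; omega⟩
            · rintro ⟨k,i⟩ hv ⟨k',i'⟩ hv' he
              simp only [Finset.coe_filter, Set.mem_ofPred_eq] at hv hv'
              simp only [Prod.mk.injEq] at he
              obtain ⟨rfl, he⟩ := he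
              have e1 := hv.2
              have e2 := hv'.2
              have : i = i' := by ext; omega
              rw [this]
        _ = 2 * d := by simp [mul_comm]
    have h3' : ∑ v ∈ R, (cn D ((v.1:ℕ)+1) ((v.2:ℕ)/2) : ℝ) ≤ (2*d) * D.card := by exact_mod_cast h3
    linarith
  calc _ ≤ (R.card * Real.exp (-(η*s))) * θ := mul_le_mul_of_nonneg_right step3 hθ.le
    _ = (R.card * θ) * Real.exp (-(η*s)) := by ring
    _ ≤ _ := mul_le_mul_of_nonneg_right step4 (Real.exp_pos _).le

/-! Stage 2 -/
noncomputable def Zq (η : ℝ) (n c : ℕ) : ℝ := ∑ a : Fin (n+1), Real.exp (-(η * |(a:ℝ) - c|))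

noncomputable def q2 (η : ℝ) (n c : ℕ) (a : Fin (n+1)) : ℝ :=
  Real.exp (-(η * |(a:ℝ) - c|)) / Zq η n c

lemma Zq_pos (η : ℝ) (n c : ℕ) : 0 < Zq η n c :=
  Finset.sum_pos (fun _ _ => Real.exp_pos _) Finset.univ_nonempty

lemma q2_nonneg (η : ℝ) (n c : ℕ) (a : Fin (n+1)) : 0 ≤ q2 η n c a :=
  div_nonneg (Real.exp_pos _).le (Zq_pos _ _ _).le

lemma q2_sum (η : ℝ) (n c : ℕ) : ∑ a, q2 η n c a = 1 := by
  unfold q2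
  rw [← Finset.sum_div]
  exact div_self (Zq_pos η n c).ne'

lemma q2_lip (η : ℝ) (hη : 0 ≤ η) (n c c' : ℕ) (h : |(c:ℝ) - c'| ≤ 1) (a : Fin (n+1)) :
    q2 η n c a ≤ Real.exp (2*η) * q2 η n c' a := by
  have key : ∀ (c c' : ℕ), |(c:ℝ) - c'| ≤ 1 → ∀ a : Fin (n+1),
      Real.exp (-(η * |(a:ℝ) - c|)) ≤ Real.exp η * Real.exp (-(η * |(a:ℝ) - c'|)) := by
    intro c c' h a
    rw [← Real.exp_add]
    apply Real.exp_le_exp.2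
    have : |(a:ℝ) - c'| ≤ |(a:ℝ) - c| + |(c:ℝ) - c'| := abs_sub_le _ _ _
    nlinarith
  have h' : |(c':ℝ) - c| ≤ 1 := by rw [abs_sub_comm]; exact h
  have hZ : Zq η n c' ≤ Real.exp η * Zq η n c := by
    unfold Zq
    rw [Finset.mul_sum]
    exact Finset.sum_le_sum fun a _ => key c' c h' a
  unfold q2
  have z1 := Zq_pos η n c
  have z2 := Zq_pos η n c'
  rw [← mul_div_assoc, div_le_div_iff₀ z1 z2, two_mul, Real.exp_add]
  calc _ ≤ (Real.exp η * Real.exp (-(η * |(a:ℝ) - c'|))) * (Real.exp η * Zq η n c) := by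
        apply mul_le_mul (key c c' h a) hZ z2.le (by positivity)
    _ = _ := by ring

lemma q2_mgf (η : ℝ) (hη : 0 ≤ η) (n c : ℕ) (hc : c ≤ n) :
    ∑ a, q2 η n c a * Real.exp (η/2 * |(a:ℝ) - c|) ≤ 3 := by
  have e : ∀ a : Fin (n+1), q2 η n c a * Real.exp (η/2 * |(a:ℝ) - c|) =
      Real.exp (-(η/2 * |(a:ℝ) - c|)) / Zq η n c := by
    intro a
    unfold q2
    rw [div_mul_eq_mul_div, ← Real.exp_add]
    congr 2; ring
  simp only [e]
  rw [← Finset.sum_div, div_le_iff₀ (Zq_pos η n c)]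
  let rel : Fin (n+1) → Fin (n+1) → Prop := fun a b => (a:ℕ) + c ≤ 2*b+1 ∧ 2*(b:ℕ) ≤ a + c + 1
  have s1 : ∀ a : Fin (n+1), Real.exp (-(η/2 * |(a:ℝ) - c|)) ≤
      ∑ b : Fin (n+1), if rel a b then Real.exp (-(η * |(b:ℝ) - c|)) else 0 := by
    intro a
    obtain ⟨b, hb1, hb2⟩ : ∃ b : Fin (n+1), rel a b ∧ 2 * |(b:ℝ) - c| ≤ |(a:ℝ) - c| := by
      have ha := a.2
      by_cases h : c ≤ (a:ℕ)
      · refine ⟨⟨c + (a-c)/2, by omega⟩, ⟨by simp only; omega, by simp only; omega⟩, ?_⟩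
        have h1 : (c:ℝ) ≤ a := by exact_mod_cast h
        have h2 : c + 2 * (((a:ℕ)-c)/2) ≤ a := by omega
        have h3 : (c:ℝ) + 2 * ((((a:ℕ)-c)/2 : ℕ):ℝ) ≤ a := by exact_mod_cast h2
        rw [abs_of_nonneg (by linarith : (0:ℝ) ≤ a - c)]
        push_cast [Nat.cast_add]
        rw [add_sub_cancel_left, abs_of_nonneg (by positivity)]
        linarith
      · refine ⟨⟨c - (c-a)/2, by omega⟩, ⟨by simp only; omega, by simp only; omega⟩, ?_⟩
        have h1 : (a:ℝ) ≤ c := by exact_mod_cast (by omega : (a:ℕ) ≤ c)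
        set w := (c-(a:ℕ))/2 with hw
        have h2 : a + 2 * w ≤ c := by omega
        have h3 : (a:ℝ) + 2 * (w:ℝ) ≤ c := by exact_mod_cast h2
        rw [abs_of_nonpos (by linarith : (a:ℝ) - c ≤ 0)]
        simp only
        rw [Nat.cast_sub (by omega)]
        rw [sub_sub_cancel_left, abs_neg, abs_of_nonneg (by positivity)]
        linarith
    have hnn : ∀ b ∈ (Finset.univ : Finset (Fin (n+1))),
        0 ≤ if rel a b then Real.exp (-(η * |(b:ℝ) - c|)) else 0 := by
      intro b _; split_ifs
      exacts [(Real.exp_pos _).le, le_rfl]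
    have := Finset.single_le_sum hnn (Finset.mem_univ b)
    rw [if_pos hb1] at this
    refine le_trans (Real.exp_le_exp.2 ?_) this
    nlinarith
  calc _ ≤ ∑ a, ∑ b : Fin (n+1), (if rel a b then Real.exp (-(η * |(b:ℝ) - c|)) else 0) :=
        Finset.sum_le_sum fun a _ => s1 a
    _ = ∑ b : Fin (n+1), ∑ a, (if rel a b then Real.exp (-(η * |(b:ℝ) - c|)) else 0) :=
        Finset.sum_comm
    _ ≤ ∑ b : Fin (n+1), 3 * Real.exp (-(η * |(b:ℝ) - c|)) := by
        apply Finset.sum_le_sum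
        intro b _
        rw [← Finset.sum_filter, Finset.sum_const, nsmul_eq_mul]
        apply mul_le_mul_of_nonneg_right _ (Real.exp_pos _).le
        have : (Finset.univ.filter (fun a => rel a b)).card ≤ (Finset.range 3).card := by
          apply Finset.card_le_card_of_injOn (fun a : Fin (n+1) => (a:ℕ) + c + 1 - 2*b)
          · intro a ha
            simp only [Finset.coe_filter, Set.mem_ofPred_eq, Finset.mem_univ, true_and] at ha
            have := ha.1
            simp; omega
          · intro a ha a' ha' he
            simp only [Finset.coe_filter, Set.mem_ofPred_eq, Finset.mem_univ, true_and] at ha ha'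
            have := ha.2
            have := ha'.2
            simp only at he
            ext; omega
        rw [Finset.card_range] at this
        exact_mod_cast this
    _ = 3 * Zq η n c := by unfold Zq; rw [Finset.mul_sum]

noncomputable def est {h n : ℕ} (ω : Fin h × Fin (2^h) → Fin (n+1)) (j : Fin (2^h)) : ℝ :=
  ∑ l : Fin h, if ((j:ℕ)/2^(l:ℕ)) % 2 = 1 then
    ((ω (l, ⟨(j:ℕ)/2^(l:ℕ) - 1,
      lt_of_le_of_lt ((Nat.sub_le _ _).trans (Nat.div_le_self _ _)) j.2⟩) : ℕ) : ℝ) else 0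

lemma bits_aux (a j h : ℕ) : (if a < j then 1 else 0) =
    (∑ l ∈ Finset.range h, if (j/2^l)%2 = 1 then (if a/2^l = j/2^l-1 then 1 else 0) else 0)
      + (if a/2^h < j/2^h then 1 else 0) := by
  induction h with
  | zero => simp
  | succ h ih =>
    rw [ih, Finset.sum_range_succ, add_assoc]
    congr 1
    rw [pow_succ, ← Nat.div_div_eq_div_mul, ← Nat.div_div_eq_div_mul]
    generalize a/2^h = a
    generalize j/2^h = j
    split_ifs <;> omega

lemma prefix_eq (h : ℕ) (j : ℕ) (hj : j < 2^h) (r : ℕ → ℕ) (D : Multiset ℕ) :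
    D.countP (fun y => r y < j) = ∑ l : Fin h, if (j/2^(l:ℕ))%2 = 1 then
      D.countP (fun y => r y / 2^(l:ℕ) = j/2^(l:ℕ) - 1) else 0 := by
  induction D using Multiset.induction with
  | empty => simp
  | cons a D ih =>
    simp only [Multiset.countP_cons]
    have := bits_aux (r a) j h
    rw [Nat.div_eq_of_lt hj] at this
    simp only [not_lt_zero, if_false, add_zero] at this
    rw [ih, this, Finset.sum_range, ← Finset.sum_add_distrib]
    apply Finset.sum_congr rfl
    intro l _
    split_ifs <;> rfl

lemma stage2_fail (h n : ℕ) (η t : ℝ) (hη : 0 ≤ η) (r : ℕ → ℕ) (D : Multiset ℕ) (hD : D.card = n) :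
    (∑ ω : Fin h × Fin (2^h) → Fin (n+1),
      if ∀ j : Fin (2^h), |est ω j - D.countP (fun y => r y < j)| ≤ t then 0 else
      pp (q2 η n) (fun v => D.countP (fun z => r z/2^(v.1:ℕ) = (v.2:ℕ))) ω)
      ≤ 2^h * 3^h * Real.exp (-(η/2 * t)) := by
  set cc : Fin h × Fin (2^h) → ℕ := (fun v => D.countP (fun z => r z/2^(v.1:ℕ) = (v.2:ℕ))) with hcc
  have hP0 : ∀ ω, 0 ≤ pp (q2 η n) cc ω := fun ω => pp_nonneg _ _ (q2_nonneg η n) ω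
  let sel : Fin (2^h) → Fin h × Fin (2^h) → Prop := fun j v =>
    ((j:ℕ)/2^(v.1:ℕ)) % 2 = 1 ∧ (v.2:ℕ) = (j:ℕ)/2^(v.1:ℕ) - 1
  let dev : Fin (2^h) → Fin h × Fin (2^h) → Fin (n+1) → ℝ := fun j v a =>
    if sel j v then |(a:ℝ) - cc v| else 0
  have hdev : ∀ ω j, |est ω j - D.countP (fun y => r y < (j:ℕ))| ≤ ∑ v, dev j v (ω v) := by
    intro ω j
    rw [prefix_eq h j j.2 r D]
    unfold est
    rw [Nat.cast_sum, ← Finset.sum_sub_distrib, Fintype.sum_prod_type]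
    refine (Finset.abs_sum_le_sum_abs _ _).trans (Finset.sum_le_sum fun l _ => ?_)
    have hnn : ∀ i ∈ (Finset.univ : Finset (Fin (2^h))), 0 ≤ dev j (l,i) (ω (l,i)) := by
      intro i _
      simp only [dev]; split_ifs
      exacts [abs_nonneg _, le_rfl]
    split_ifs with hb
    · have := Finset.single_le_sum hnn (Finset.mem_univ (⟨(j:ℕ)/2^(l:ℕ) - 1,
        lt_of_le_of_lt ((Nat.sub_le _ _).trans (Nat.div_le_self _ _)) j.2⟩ : Fin (2^h)))
      refine le_trans (le_of_eq ?_) this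
      simp only [dev]
      rw [if_pos ⟨hb, rfl⟩]
    · simp only [Nat.cast_zero, sub_zero, abs_zero]
      exact Finset.sum_nonneg hnn
  have step1 : ∀ ω, (if ∀ j : Fin (2^h), |est ω j - D.countP (fun y => r y < j)| ≤ t then 0 else
      pp (q2 η n) cc ω) ≤ ∑ j : Fin (2^h), Real.exp (-(η/2 * t)) *
        (pp (q2 η n) cc ω * ∏ v, Real.exp (η/2 * dev j v (ω v))) := by
    intro ω
    have hnn : ∀ j ∈ (Finset.univ : Finset (Fin (2^h))), 0 ≤ Real.exp (-(η/2 * t)) *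
        (pp (q2 η n) cc ω * ∏ v, Real.exp (η/2 * dev j v (ω v))) := by
      intro j _
      exact mul_nonneg (Real.exp_pos _).le (mul_nonneg (hP0 ω)
        (Finset.prod_nonneg fun _ _ => (Real.exp_pos _).le))
    split_ifs with hg
    · exact Finset.sum_nonneg hnn
    · push Not at hg
      obtain ⟨j, hj⟩ := hg
      refine le_trans ?_ (Finset.single_le_sum hnn (Finset.mem_univ j))
      rw [← Real.exp_sum, ← Finset.mul_sum, mul_left_comm, ← Real.exp_add]
      apply le_mul_of_one_le_right (hP0 ω)
      apply Real.one_le_exp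
      have := hdev ω j
      nlinarith
  have step2 : ∀ j, ∑ ω, (pp (q2 η n) cc ω * ∏ v, Real.exp (η/2 * dev j v (ω v))) ≤ 3^h := by
    intro j
    rw [pp_expect (q2 η n) cc (fun v a => Real.exp (η/2 * dev j v a))]
    have b : ∀ v, ∑ a, q2 η n (cc v) a * Real.exp (η/2 * dev j v a) ≤ if sel j v then 3 else 1 := by
      intro v
      simp only [dev]
      split_ifs with hs
      · apply q2_mgf η hη
        rw [← hD]; exact Multiset.countP_le_card _ _
      · simp [q2_sum]
    calc _ ≤ ∏ v, (if sel j v then (3:ℝ) else 1) := by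
          apply Finset.prod_le_prod
          · intro v _
            exact Finset.sum_nonneg fun a _ => mul_nonneg (q2_nonneg _ _ _ _) (Real.exp_pos _).le
          · intro v _; exact b v
      _ = 3 ^ (Finset.univ.filter (fun v => sel j v)).card := by
          rw [Finset.prod_ite]; simp
      _ ≤ 3 ^ h := by
          apply pow_le_pow_right₀ (by norm_num)
          calc _ ≤ (Finset.univ : Finset (Fin h)).card := by
                apply Finset.card_le_card_of_injOn (fun v => v.1)
                · intro v _; simp
                · rintro ⟨k,i⟩ hv ⟨k',i'⟩ hv' he
                  simp only [Finset.coe_filter, Set.mem_ofPred_eq, Finset.mem_univ, true_and] at hv hv'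
                  simp only at he
                  subst he
                  have : i = i' := by
                    ext; exact hv.2.trans hv'.2.symm
                  rw [this]
            _ = h := by simp
  calc _ ≤ ∑ ω, ∑ j : Fin (2^h), Real.exp (-(η/2 * t)) *
        (pp (q2 η n) cc ω * ∏ v, Real.exp (η/2 * dev j v (ω v))) :=
        Finset.sum_le_sum fun ω _ => step1 ω
    _ = ∑ j : Fin (2^h), Real.exp (-(η/2 * t)) *
        ∑ ω, (pp (q2 η n) cc ω * ∏ v, Real.exp (η/2 * dev j v (ω v))) := by
        rw [Finset.sum_comm]; simp only [Finset.mul_sum]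
    _ ≤ ∑ j : Fin (2^h), Real.exp (-(η/2 * t)) * 3^h :=
        Finset.sum_le_sum fun j _ => mul_le_mul_of_nonneg_left (step2 j) (Real.exp_pos _).le
    _ = _ := by simp; ring

lemma countP_le_add (D : Multiset ℕ) (p q r : ℕ → Prop) [DecidablePred p] [DecidablePred q]
    [DecidablePred r] (h : ∀ y ∈ D, p y → q y ∨ r y) :
    D.countP p ≤ D.countP q + D.countP r := by
  induction D using Multiset.induction with
  | empty => simp
  | cons a D ih =>
    have h1 := ih (fun y hy => h y (Multiset.mem_cons_of_mem hy))
    have h2 := h a (Multiset.mem_cons_self a D)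
    simp only [Multiset.countP_cons]
    split_ifs <;> first | omega | tauto

noncomputable def rk (d : ℕ) (F : ℕ → ℕ → Prop) (z : ℕ) : ℕ :=
  ((cuts d F).filter (fun s => s ≤ z)).card

lemma rk_mono (d : ℕ) (F : ℕ → ℕ → Prop) {a b : ℕ} (h : a ≤ b) : rk d F a ≤ rk d F b := by
  apply Finset.card_le_card
  intro s hs
  rw [Finset.mem_filter] at hs ⊢
  exact ⟨hs.1, hs.2.trans h⟩

lemma rk_lt (d : ℕ) (F : ℕ → ℕ → Prop) {a b s : ℕ} (hs : s ∈ cuts d F) (h1 : a < s) (h2 : s ≤ b) :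
    rk d F a < rk d F b := by
  apply Finset.card_lt_card
  rw [Finset.ssubset_iff_of_subset]
  · refine ⟨s, Finset.mem_filter.2 ⟨hs, h2⟩, ?_⟩
    rw [Finset.mem_filter]; rintro ⟨_, h⟩; omega
  · intro s hs
    rw [Finset.mem_filter] at hs ⊢
    exact ⟨hs.1, by omega⟩

lemma rk_acc (d : ℕ) (θ T : ℝ) (D : Multiset ℕ) (F : ℕ → ℕ → Prop)
    (hD : ∀ x ∈ D, 1 ≤ x ∧ x ≤ 2^d)
    (hT0 : 0 ≤ T) (hT : θ ≤ T) (hG : good d θ T D F)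
    (x : ℕ) (hx : x < 2^d) :
    |(D.countP (fun y => y ≤ x) : ℝ) - D.countP (fun y => rk d F (y-1) < rk d F x)| ≤ T := by
  obtain ⟨s, hsx, hs, hc⟩ := gap d θ T D F hT0 hT hG x hx
  have h1 := countP_le_add D (fun y => y ≤ x) (fun y => rk d F (y-1) < rk d F x)
    (fun y => s ≤ y - 1 ∧ y - 1 < x) (by
      intro y hy hyx
      have := hD y hy
      by_cases h : s ≤ y - 1
      · right; exact ⟨h, by omega⟩
      · left
        rcases hs with hs | hs
        · omega
        · exact rk_lt d F hs (by omega) hsx)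
  have h2 := countP_le_add D (fun y => rk d F (y-1) < rk d F x) (fun y => y ≤ x) (fun _ => False) (by
      intro y hy h
      left
      by_contra hc
      have := rk_mono d F (show x ≤ y - 1 by omega)
      omega)
  have h3 : D.countP (fun _ => False) = 0 := by
    rw [Multiset.countP_eq_zero]; simp
  rw [h3, add_zero] at h2
  have h1' : (D.countP (fun y => y ≤ x) : ℝ) ≤ D.countP (fun y => rk d F (y-1) < rk d F x) +
    D.countP (fun y => s ≤ y - 1 ∧ y - 1 < x) := by exact_mod_cast h1
  have h2' : (D.countP (fun y => rk d F (y-1) < rk d F x) : ℝ) ≤ D.countP (fun y => y ≤ x) := by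
    exact_mod_cast h2
  rw [abs_le]; constructor <;> linarith

lemma rk_le (d : ℕ) (F : ℕ → ℕ → Prop) (z : ℕ) : rk d F z ≤ (cuts d F).card :=
  Finset.card_le_card (Finset.filter_subset _ _)

lemma cuts_lt (d : ℕ) (F : ℕ → ℕ → Prop) : (cuts d F).card < 2^d := by
  have : (cuts d F).card ≤ (Finset.Ico 1 (2^d)).card := Finset.card_le_card (Finset.filter_subset _ _)
  rw [Nat.card_Ico] at this
  have : 0 < 2^d := by positivity
  omega

lemma iquery_eq (D : Multiset ℕ) (a b : ℕ) (ha : 1 ≤ a) (hab : a ≤ b) :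
    iquery a b D = ((D.countP (fun y => y ≤ b) : ℝ) - D.countP (fun y => y ≤ a - 1)) / D.card := by
  unfold iquery
  congr 1
  rw [eq_sub_iff_add_eq]
  norm_cast
  induction D using Multiset.induction with
  | empty => simp
  | cons z D ih =>
    simp only [Multiset.countP_cons]
    rw [← ih]
    by_cases h1 : a ≤ z ∧ z ≤ b
    · rw [Multiset.filter_cons_of_pos (p := fun x => a ≤ x ∧ x ≤ b) D h1, Multiset.card_cons, if_neg (by omega), if_pos h1.2]
      ring
    · rw [Multiset.filter_cons_of_neg (p := fun x => a ≤ x ∧ x ≤ b) D h1]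
      split_ifs <;> omega

lemma finish (d n : ℕ) (hn : 0 < n) (ε α δ : ℝ) (hδ : 0 < δ)
    {Ω : Type} [Fintype Ω] (p : Multiset ℕ → Ω → ℝ)
    (p0 : ∀ D ω, 0 ≤ p D ω) (p1 : ∀ D, ∑ ω, p D ω = 1)
    (pdp : ∀ D₀ x y ω, p (x ::ₘ D₀) ω ≤ Real.exp ε * p (y ::ₘ D₀) ω)
    (E : Ω → ℕ → ℝ)
    (hfail : ∀ D : Multiset ℕ, D.card = n → (∀ x ∈ D, 1 ≤ x ∧ x ≤ 2^d) →
      ∑ ω, (if ∀ x < 2^d, |(D.countP (fun y => y ≤ x) : ℝ) - E ω x| ≤ α * n / 4 then 0 else p D ω) ≤ δ) :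
      ∃ M : Multiset ℕ → PMF (Multiset ℕ),
        (∀ D D'' : Multiset ℕ, D.card = n → D''.card = n →
          (∀ x ∈ D, 1 ≤ x ∧ x ≤ 2 ^ d) → (∀ x ∈ D'', 1 ≤ x ∧ x ≤ 2 ^ d) →
          Neighbor D D'' →
          ∀ E : Set (Multiset ℕ),
            (M D).toOuterMeasure E ≤
              ENNReal.ofReal (Real.exp ε) * (M D'').toOuterMeasure E) ∧
        (∀ D : Multiset ℕ, ∀ Dhat ∈ (M D).support, Dhat ≠ 0 ∧ ∀ x ∈ Dhat, 1 ≤ x ∧ x ≤ 2 ^ d) ∧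
        (∀ D : Multiset ℕ, D.card = n → D ≠ 0 → (∀ x ∈ D, 1 ≤ x ∧ x ≤ 2 ^ d) →
          1 - ENNReal.ofReal δ ≤
            (M D).toOuterMeasure {Dhat | ∀ a b : ℕ, 1 ≤ a → a ≤ b → b ≤ 2 ^ d →
              |iquery a b Dhat - iquery a b D| ≤ α}) := by
  let ok : Ω → Multiset ℕ → Prop := fun ω D => D.card = n ∧ (∀ x ∈ D, 1 ≤ x ∧ x ≤ 2^d) ∧
    ∀ x < 2^d, |(D.countP (fun y => y ≤ x) : ℝ) - E ω x| ≤ α * n / 4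
  let post : Ω → Multiset ℕ := fun ω => if h : ∃ D, ok ω D then Classical.choose h else {1}
  have hpost : ∀ ω D, ok ω D → ok ω (post ω) := by
    intro ω D h
    have h' : ∃ D, ok ω D := ⟨D, h⟩
    simp only [post]
    rw [dif_pos h']
    exact Classical.choose_spec h'
  have hsum : ∀ D, ∑ ω, ENNReal.ofReal (p D ω) = 1 := by
    intro D
    rw [← ENNReal.ofReal_sum_of_nonneg (fun ω _ => p0 D ω), p1, ENNReal.ofReal_one]
  refine ⟨fun D => (PMF.ofFintype (fun ω => ENNReal.ofReal (p D ω)) (hsum D)).map post, ?_, ?_, ?_⟩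
  · rintro D D'' - - - - ⟨D₀, x, y, rfl, rfl⟩ S
    rw [PMF.toOuterMeasure_map_apply, PMF.toOuterMeasure_map_apply,
      PMF.toOuterMeasure_apply_fintype, PMF.toOuterMeasure_apply_fintype, Finset.mul_sum]
    apply Finset.sum_le_sum
    intro ω _
    by_cases h : ω ∈ post ⁻¹' S
    · rw [Set.indicator_of_mem h, Set.indicator_of_mem h]
      simp only [PMF.ofFintype_apply]
      rw [← ENNReal.ofReal_mul (Real.exp_pos _).le]
      exact ENNReal.ofReal_le_ofReal (pdp D₀ x y ω)
    · rw [Set.indicator_of_notMem h]; exact zero_le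
  · intro D Dhat hDhat
    rw [PMF.mem_support_map_iff] at hDhat
    obtain ⟨ω, -, rfl⟩ := hDhat
    by_cases h : ∃ D, ok ω D
    · obtain ⟨D', hD'⟩ := h
      obtain ⟨h1, h2, -⟩ := hpost ω D' hD'
      refine ⟨?_, h2⟩
      intro h0
      rw [h0] at h1
      simp at h1
      omega
    · simp only [post]
      rw [dif_neg h]
      refine ⟨by simp, ?_⟩
      intro x hx
      rw [Multiset.mem_singleton] at hx
      subst hx
      exact ⟨le_rfl, Nat.one_le_two_pow⟩
  · intro D hcard _ hD
    set U : Set (Multiset ℕ) := {Dhat | ∀ a b : ℕ, 1 ≤ a → a ≤ b → b ≤ 2 ^ d →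
              |iquery a b Dhat - iquery a b D| ≤ α} with hU
    rw [PMF.toOuterMeasure_map_apply, PMF.toOuterMeasure_apply_fintype, tsub_le_iff_right]
    have hf := hfail D hcard hD
    calc (1 : ENNReal) = ∑ ω, ENNReal.ofReal (p D ω) := (hsum D).symm
      _ ≤ ∑ ω, ((post ⁻¹' U).indicator
            (PMF.ofFintype (fun ω => ENNReal.ofReal (p D ω)) (hsum D)) ω + ENNReal.ofReal (if ∀ x < 2^d, |(D.countP (fun y => y ≤ x) : ℝ) - E ω x| ≤ α * n / 4
            then 0 else p D ω)) := by
          apply Finset.sum_le_sum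
          intro ω _
          split_ifs with hok
          · rw [Set.indicator_of_mem]
            · simp only [PMF.ofFintype_apply]; exact le_self_add
            · have okD : ok ω D := ⟨hcard, hD, hok⟩
              obtain ⟨g1, g2, g3⟩ := hpost ω D okD
              have top : ∀ D : Multiset ℕ, D.card = n → (∀ x ∈ D, 1 ≤ x ∧ x ≤ 2^d) →
                  D.countP (fun y => y ≤ 2^d) = n := by
                intro D hc hd
                rw [← hc, Multiset.countP_eq_card]
                intro y hy; exact (hd y hy).2
              have hnp : (0:ℝ) < n := by exact_mod_cast hn
              have pre : ∀ x, x ≤ 2^d → |((post ω).countP (fun y => y ≤ x) : ℝ) -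
                  D.countP (fun y => y ≤ x)| ≤ α * n / 2 := by
                intro x hx
                rcases hx.lt_or_eq with hx | rfl
                · have a1 := abs_le.1 (g3 x hx)
                  have a2 := abs_le.1 (hok x hx)
                  rw [abs_le]; constructor <;> linarith [a1.1, a1.2, a2.1, a2.2]
                · rw [top _ g1 g2, top D hcard hD, sub_self, abs_zero]
                  have h1 := (abs_nonneg _).trans (hok 0 (by positivity))
                  linarith
              intro a b ha hab hb
              rw [iquery_eq _ a b ha hab, iquery_eq _ a b ha hab, g1, hcard, ← sub_div, abs_div,
                abs_of_pos hnp, div_le_iff₀ hnp]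
              have b1 := abs_le.1 (pre b hb)
              have b2 := abs_le.1 (pre (a-1) (by omega))
              rw [abs_le]; constructor <;> linarith [b1.1, b1.2, b2.1, b2.2]
          · exact le_add_self
      _ ≤ _ := by
          rw [Finset.sum_add_distrib]
          gcongr
          rw [← ENNReal.ofReal_sum_of_nonneg]
          · exact ENNReal.ofReal_le_ofReal hf
          · intro ω _
            split_ifs
            exacts [le_rfl, p0 D ω]

lemma combine {A B : Type} [Fintype A] [Fintype B] (P : A → ℝ) (Q : A → B → ℝ)
    (hP : ∀ a, 0 ≤ P a) (hQ : ∀ a b, 0 ≤ Q a b) (hP1 : ∑ a, P a = 1) (hQ1 : ∀ a, ∑ b, Q a b = 1)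
    (g : A → Prop) (k : A → B → Prop) (ok : A × B → Prop) [DecidablePred g]
    [∀ a, DecidablePred (k a)] [DecidablePred ok]
    (h : ∀ a b, g a → k a b → ok (a,b)) (f1 f2 : ℝ)
    (h1 : ∑ a, (if g a then 0 else P a) ≤ f1) (h2 : ∀ a, ∑ b, (if k a b then 0 else Q a b) ≤ f2) :
    ∑ ω : A × B, (if ok ω then 0 else P ω.1 * Q ω.1 ω.2) ≤ f1 + f2 := by
  rw [Fintype.sum_prod_type]
  calc _ ≤ ∑ a, ∑ b, ((if g a then 0 else P a) * Q a b + P a * (if k a b then 0 else Q a b)) := by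
        apply Finset.sum_le_sum; intro a _
        apply Finset.sum_le_sum; intro b _
        have h3 := mul_nonneg (hP a) (hQ a b)
        by_cases hg : g a <;> by_cases hk : k a b <;> by_cases ho : ok (a,b) <;> simp [hg, hk, ho]
        · exact absurd (h a b hg hk) ho
        all_goals first | exact h3 | linarith
    _ = ∑ a, ((if g a then 0 else P a) + P a * ∑ b, (if k a b then 0 else Q a b)) := by
        apply Finset.sum_congr rfl; intro a _
        rw [Finset.sum_add_distrib, ← Finset.mul_sum, hQ1, mul_one, ← Finset.mul_sum]
    _ ≤ ∑ a, ((if g a then 0 else P a) + P a * f2) := by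
        apply Finset.sum_le_sum; intro a _
        have := mul_le_mul_of_nonneg_left (h2 a) (hP a)
        linarith
    _ ≤ f1 + f2 := by
        rw [Finset.sum_add_distrib, ← Finset.sum_mul, hP1, one_mul]
        linarith

set_option maxHeartbeats 2000000 in
lemma main_case (d : ℕ) (hd : 1 ≤ d) (ε α δ : ℝ) (hε : 0 < ε) (hα : 0 < α) (hα1 : α < 1)
    (hδ : 0 < δ) (hδ1 : δ < 1) (hw : 2 ≤ (d:ℝ) / (δ * α)) (n : ℕ)
    (hn : (n : ℝ) ≥ 2560 * d / (ε * α) * Real.log (d / (δ * α))) :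
      ∃ M : Multiset ℕ → PMF (Multiset ℕ),
        (∀ D D'' : Multiset ℕ, D.card = n → D''.card = n →
          (∀ x ∈ D, 1 ≤ x ∧ x ≤ 2 ^ d) → (∀ x ∈ D'', 1 ≤ x ∧ x ≤ 2 ^ d) →
          Neighbor D D'' →
          ∀ E : Set (Multiset ℕ),
            (M D).toOuterMeasure E ≤
              ENNReal.ofReal (Real.exp ε) * (M D'').toOuterMeasure E) ∧
        (∀ D : Multiset ℕ, ∀ Dhat ∈ (M D).support, Dhat ≠ 0 ∧ ∀ x ∈ Dhat, 1 ≤ x ∧ x ≤ 2 ^ d) ∧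
        (∀ D : Multiset ℕ, D.card = n → D ≠ 0 → (∀ x ∈ D, 1 ≤ x ∧ x ≤ 2 ^ d) →
          1 - ENNReal.ofReal δ ≤
            (M D).toOuterMeasure {Dhat | ∀ a b : ℕ, 1 ≤ a → a ≤ b → b ≤ 2 ^ d →
              |iquery a b Dhat - iquery a b D| ≤ α}) := by
  set w : ℝ := (d:ℝ) / (δ * α) with hwdef
  set L := Real.log w with hL
  have hw0 : 0 < w := by linarith
  have hLpos : 0 < L := Real.log_pos (by linarith)
  have hexpL : Real.exp L = w := Real.exp_log hw0
  have hdR : (1:ℝ) ≤ d := by exact_mod_cast hd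
  have hdpos : (0:ℝ) < d := by linarith
  have hbig : 2560 * d * L ≤ ε * α * n := by
    have : 2560 * d / (ε * α) * L * (ε * α) ≤ n * (ε * α) := by gcongr
    have e : 2560 * d / (ε * α) * L * (ε * α) = 2560 * d * L := by field_simp
    rw [e] at this; linarith
  have hnpos : (0:ℝ) < n := by
    by_contra hc
    have h0 : (n:ℝ) = 0 := le_antisymm (not_lt.1 hc) (by positivity)
    rw [h0] at hbig
    have : 0 < 2560 * d * L := by positivity
    linarith
  have hnN : 0 < n := by exact_mod_cast hnpos
  have hdα : (d:ℝ) / α = δ * w := by rw [hwdef]; field_simp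
  have hdα1 : (1:ℝ) ≤ d / α := by rw [le_div_iff₀ hα]; linarith
  -- the height
  set m : ℕ := ⌊16 * (d / α)⌋₊ with hm
  have hm1 : (m:ℝ) ≤ 16 * (d/α) := Nat.floor_le (by positivity)
  have hm0 : m ≠ 0 := by
    have : 1 ≤ m := Nat.le_floor (by push_cast; linarith)
    omega
  set h : ℕ := min d (Nat.log 2 m + 1) with hh
  have hh1 : 1 ≤ h := by rw [hh]; exact le_min hd (by omega)
  have hhd : h ≤ d := min_le_left _ _
  have hhR : (1:ℝ) ≤ h := by exact_mod_cast hh1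
  have hhdR : (h:ℝ) ≤ d := by exact_mod_cast hhd
  have h2h : (2:ℝ)^h ≤ w^6 := by
    have a1 : 2^h ≤ 2 * m := by
      calc 2^h ≤ 2^(Nat.log 2 m + 1) := Nat.pow_le_pow_right (by norm_num) (min_le_right _ _)
        _ = 2 * 2^(Nat.log 2 m) := by ring
        _ ≤ 2 * m := Nat.mul_le_mul_left _ (Nat.pow_log_le_self 2 hm0)
    have a2 : (2:ℝ)^h ≤ 2 * m := by exact_mod_cast a1
    have a3 : (2:ℝ)^5 ≤ w^5 := by gcongr
    calc (2:ℝ)^h ≤ 32 * (d/α) := by linarith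
      _ = 32 * (δ * w) := by rw [hdα]
      _ ≤ 32 * w := by nlinarith
      _ ≤ w^5 * w := by
        apply mul_le_mul_of_nonneg_right _ hw0.le
        norm_num at a3; exact a3
      _ = w^6 := by ring
  set η1 : ℝ := ε / (4 * d) with hη1
  set η2 : ℝ := ε / (8 * h) with hη2
  have hη1p : 0 < η1 := by positivity
  have hη2p : 0 < η2 := by positivity
  have hexp20 : Real.exp (-(20 * L)) = (w^20)⁻¹ := by
    rw [Real.exp_neg, ← hexpL, ← Real.exp_nat_mul]; norm_num
  have ex1 : Real.exp (-(η1 * (α * n / 32))) ≤ (w^20)⁻¹ := by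
    rw [← hexp20]
    apply Real.exp_le_exp.2
    have : η1 * (α * n / 32) = (ε * α * n) / (128 * d) := by rw [hη1]; field_simp; norm_num
    rw [this, neg_le_neg_iff, le_div_iff₀ (by positivity)]
    linarith
  have ex2 : Real.exp (-(η2/2 * (α * n / 8))) ≤ (w^20)⁻¹ := by
    rw [← hexp20]
    apply Real.exp_le_exp.2
    have : η2/2 * (α * n / 8) = (ε * α * n) / (128 * h) := by rw [hη2]; field_simp; norm_num
    rw [this, neg_le_neg_iff, le_div_iff₀ (by positivity)]
    have : L * h ≤ L * d := by gcongr
    nlinarith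
  let Ω1 := Fin d × Fin (2^d) → Bool
  let Ω2 := Fin h × Fin (2^h) → Fin (n+1)
  let P1 : Multiset ℕ → Ω1 → ℝ := fun D =>
    pp (q1 η1 (3 * α * n / 32)) (fun v => D.countP (fun z => (z-1)/2^((v.1:ℕ)+1) = (v.2:ℕ)))
  let P2 : Multiset ℕ → Ω1 → Ω2 → ℝ := fun D ω1 =>
    pp (q2 η2 n) (fun v => D.countP (fun z => rk d (flag ω1) (z-1)/2^(v.1:ℕ) = (v.2:ℕ)))
  have h2pos : 0 < 2^h := by positivity
  let E : Ω1 × Ω2 → ℕ → ℝ := fun ω x =>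
    est ω.2 ⟨min (rk d (flag ω.1) x) (2^h - 1), by omega⟩
  have P1nn : ∀ D ω, 0 ≤ P1 D ω := fun D ω => pp_nonneg _ _ (q1_nonneg _ _) ω
  have P2nn : ∀ D ω ω', 0 ≤ P2 D ω ω' := fun D ω ω' => pp_nonneg _ _ (q2_nonneg _ _) ω'
  have P1s : ∀ D, ∑ ω, P1 D ω = 1 := fun D => pp_sum _ _ (q1_sum _ _)
  have P2s : ∀ D ω, ∑ ω', P2 D ω ω' = 1 := fun D ω => pp_sum _ _ (q2_sum _ _)
  apply finish d n hnN ε α δ hδ (Ω := Ω1 × Ω2) (fun D ω => P1 D ω.1 * P2 D ω.1 ω.2) _ _ _ E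
  · intro D hcard hD
    have hcardR : (D.card : ℝ) = n := by exact_mod_cast hcard
    have f1 : ∑ ω : Ω1, (if good d (α * n / 16) (α * n / 8) D (flag ω) then 0 else P1 D ω) ≤ δ/2 := by
      have := stage1_fail d η1 (3 * α * n / 32) (α * n / 32) (α * n / 16) (α * n / 8) D hη1p.le
        (by positivity) (by linarith) (by linarith) (by nlinarith [mul_pos hα hnpos])
      rw [hcardR] at this
      have h3 : 2 * d * n * Real.exp (-(η1 * (α * n / 32))) ≤ (δ/2) * (α * n / 16) := by
        calc _ ≤ 2 * d * n * (w^20)⁻¹ := by gcongr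
          _ ≤ _ := by
            rw [← div_eq_mul_inv, div_le_iff₀ (by positivity)]
            have hd' : (d:ℝ) = α * (δ * w) := by rw [← hdα]; field_simp
            have a3 : (2:ℝ)^19 ≤ w^19 := by gcongr
            have a4 : (64:ℝ) ≤ w^19 := by norm_num at a3; linarith
            have pos : 0 ≤ α * δ * n * w := by positivity
            have : 2 * d * n = 2 * (α * δ * n * w) := by rw [hd']; ring
            rw [this]
            have e2 : δ / 2 * (α * n / 16) * w^20 = (α * δ * n * w) * (w^19/32) := by ring
            rw [e2]
            nlinarith
      exact le_of_mul_le_mul_right (this.trans h3) (by positivity)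
    have f2 : ∀ ω1 : Ω1, ∑ ω : Ω2, (if ∀ j : Fin (2^h),
        |est ω j - D.countP (fun y => rk d (flag ω1) (y-1) < j)| ≤ α * n / 8 then 0 else P2 D ω1 ω)
        ≤ δ/2 := by
      intro ω1
      refine (stage2_fail h n η2 (α * n / 8) hη2p.le (fun y => rk d (flag ω1) (y-1)) D hcard).trans ?_
      have b1 : (3:ℝ)^h ≤ (w^6)^2 := by
        calc (3:ℝ)^h ≤ 4^h := by gcongr; norm_num
          _ = (2^h)^2 := by rw [← pow_mul, mul_comm, pow_mul]; norm_num
          _ ≤ _ := by gcongr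
      calc _ ≤ w^6 * (w^6)^2 * (w^20)⁻¹ := by gcongr
        _ = 1 / (w * w) := by field_simp
        _ ≤ δ/2 := by
          have c1 : 1 ≤ δ * w := by rw [← hdα]; exact hdα1
          rw [div_le_iff₀ (by positivity)]
          nlinarith
    have := combine (P1 D) (P2 D) (P1nn D) (P2nn D) (P1s D) (P2s D)
      (fun ω => good d (α * n / 16) (α * n / 8) D (flag ω))
      (fun ω1 ω => ∀ j : Fin (2^h),
        |est ω j - D.countP (fun y => rk d (flag ω1) (y-1) < j)| ≤ α * n / 8)
      (fun ω => ∀ x < 2^d, |(D.countP (fun y => y ≤ x) : ℝ) - E ω x| ≤ α * n / 4)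
      (by
        intro ω1 ω2 hg hk x hx
        have hcl : rk d (flag ω1) x < 2^h := by
          have r1 := rk_le d (flag ω1) x
          have r2 := cuts_lt d (flag ω1)
          have r3 := cuts_card d _ _ D (flag ω1) hD (by rw [hcardR]; nlinarith) hg
          rw [hcardR] at r3
          have r4 : ((cuts d (flag ω1)).card : ℝ) ≤ 16 * (d/α) := by
            have : (16 * (d/α)) * (α * n / 16) = d * n := by field_simp
            rw [← this] at r3
            exact le_of_mul_le_mul_right r3 (by positivity)
          have r5 : (cuts d (flag ω1)).card ≤ m := Nat.le_floor r4
          have r6 : m < 2^(Nat.log 2 m + 1) := Nat.lt_pow_succ_log_self (by norm_num) m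
          rcases min_choice d (Nat.log 2 m + 1) with hc | hc <;> rw [← hh] at hc <;> rw [hc] <;> omega
        have e1 := rk_acc d _ _ D (flag ω1) hD (by positivity) (by nlinarith [mul_pos hα hnpos]) hg x hx
        have e2 := hk ⟨rk d (flag ω1) x, hcl⟩
        have e3 : E (ω1, ω2) x = est ω2 ⟨rk d (flag ω1) x, hcl⟩ := by
          simp only [E]
          congr 1
          ext
          simp only
          omega
        rw [e3]
        have g1 := abs_le.1 e1
        have g2 := abs_le.1 e2
        simp only at g2
        rw [abs_le]; constructor <;> linarith [g1.1, g1.2, g2.1, g2.2])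
      (δ/2) (δ/2) f1 f2
    linarith
  · intro D ω; exact mul_nonneg (P1nn _ _) (P2nn _ _ _)
  · intro D
    rw [Fintype.sum_prod_type]
    simp only [← Finset.mul_sum, P2s, mul_one, P1s]
  · intro D₀ x y ω
    have a1 : P1 (x ::ₘ D₀) ω.1 ≤ Real.exp (ε/2) * P1 (y ::ₘ D₀) ω.1 := by
      have := pp_dp (q1 η1 (3 * α * n / 32)) η1 (q1_nonneg _ _) (q1_up _ _ hη1p.le)
        (q1_down _ _ hη1p.le) hη1p.le (fun l z => (z-1)/2^(l+1)) D₀ x y ω.1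
      have e : 2 * (d:ℝ) * η1 = ε/2 := by rw [hη1]; field_simp; norm_num
      rw [e] at this
      exact this
    have a2 : P2 (x ::ₘ D₀) ω.1 ω.2 ≤ Real.exp (ε/2) * P2 (y ::ₘ D₀) ω.1 ω.2 := by
      have := pp_dp (q2 η2 n) (2*η2) (q2_nonneg _ _)
        (fun c a => q2_lip η2 hη2p.le n (c+1) c (by simp) a)
        (fun c a => q2_lip η2 hη2p.le n c (c+1) (by simp) a)
        (by positivity) (fun l z => rk d (flag ω.1) (z-1)/2^l) D₀ x y ω.2
      have e : 2 * (h:ℝ) * (2 * η2) = ε/2 := by rw [hη2]; field_simp; norm_num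
      rw [e] at this
      exact this
    calc _ ≤ (Real.exp (ε/2) * P1 (y ::ₘ D₀) ω.1) * (Real.exp (ε/2) * P2 (y ::ₘ D₀) ω.1 ω.2) :=
          mul_le_mul a1 a2 (P2nn _ _ _) (mul_nonneg (Real.exp_pos _).le (P1nn _ _))
      _ = (Real.exp (ε/2) * Real.exp (ε/2)) * (P1 (y ::ₘ D₀) ω.1 * P2 (y ::ₘ D₀) ω.1 ω.2) := by ring
      _ = _ := by rw [← Real.exp_add, add_halves]

lemma easy_case (ε α δ : ℝ) (hε : 0 < ε) (hα : 1/2 ≤ α) (n : ℕ) :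
      ∃ M : Multiset ℕ → PMF (Multiset ℕ),
        (∀ D D'' : Multiset ℕ, D.card = n → D''.card = n →
          (∀ x ∈ D, 1 ≤ x ∧ x ≤ 2 ^ 1) → (∀ x ∈ D'', 1 ≤ x ∧ x ≤ 2 ^ 1) →
          Neighbor D D'' →
          ∀ E : Set (Multiset ℕ),
            (M D).toOuterMeasure E ≤
              ENNReal.ofReal (Real.exp ε) * (M D'').toOuterMeasure E) ∧
        (∀ D : Multiset ℕ, ∀ Dhat ∈ (M D).support, Dhat ≠ 0 ∧ ∀ x ∈ Dhat, 1 ≤ x ∧ x ≤ 2 ^ 1) ∧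
        (∀ D : Multiset ℕ, D.card = n → D ≠ 0 → (∀ x ∈ D, 1 ≤ x ∧ x ≤ 2 ^ 1) →
          1 - ENNReal.ofReal δ ≤
            (M D).toOuterMeasure {Dhat | ∀ a b : ℕ, 1 ≤ a → a ≤ b → b ≤ 2 ^ 1 →
              |iquery a b Dhat - iquery a b D| ≤ α}) := by
  refine ⟨fun _ => PMF.pure {1, 2}, ?_, ?_, ?_⟩
  · intro D D'' _ _ _ _ _ S
    apply le_mul_of_one_le_left zero_le
    rw [ENNReal.one_le_ofReal]
    exact Real.one_le_exp hε.le
  · intro D Dhat h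
    rw [PMF.support_pure, Set.mem_singleton_iff] at h
    subst h
    refine ⟨by simp, ?_⟩
    intro x hx
    simp only [Multiset.insert_eq_cons, Multiset.mem_cons, Multiset.mem_singleton] at hx
    omega
  · intro D _ hD0 hD
    rw [PMF.toOuterMeasure_pure_apply, if_pos]
    · exact tsub_le_self
    · intro a b ha hab hb
      have hcpos : (0:ℝ) < D.card := by
        exact_mod_cast Multiset.card_pos.2 hD0
      have h0 : 0 ≤ iquery a b D := by unfold iquery; positivity
      have h1 : iquery a b D ≤ 1 := by
        unfold iquery
        rw [div_le_one hcpos]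
        exact_mod_cast Multiset.card_le_card (Multiset.filter_le _ _)
      have hcases : (a = 1 ∧ b = 1) ∨ (a = 1 ∧ b = 2) ∨ (a = 2 ∧ b = 2) := by omega
      rcases hcases with ⟨rfl, rfl⟩ | ⟨rfl, rfl⟩ | ⟨rfl, rfl⟩
      · have e : iquery 1 1 {1,2} = 1/2 := by
          rw [iquery_eq _ _ _ (by norm_num) (by norm_num)]
          simp [Multiset.insert_eq_cons, Multiset.countP_cons, ← Multiset.cons_zero]
        rw [e, abs_le]; constructor <;> linarith
      · have e : iquery 1 2 {1,2} = 1 := by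
          rw [iquery_eq _ _ _ (by norm_num) (by norm_num)]
          simp [Multiset.insert_eq_cons, Multiset.countP_cons, ← Multiset.cons_zero]
        have e' : iquery 1 2 D = 1 := by
          unfold iquery
          rw [Multiset.filter_eq_self.2, div_self hcpos.ne']
          intro x hx; have := hD x hx; omega
        rw [e, e', sub_self, abs_zero]; linarith
      · have e : iquery 2 2 {1,2} = 1/2 := by
          rw [iquery_eq _ _ _ (by norm_num) (by norm_num)]
          simp [Multiset.insert_eq_cons, Multiset.countP_cons, ← Multiset.cons_zero]
          norm_num
        rw [e, abs_le]; constructor <;> linarith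

theorem stmt10 :
    ∃ c : ℝ, 0 < c ∧
      ∀ d : ℕ, 1 ≤ d → ∀ ε α δ : ℝ, 0 < ε → 0 < α → α < 1 → 0 < δ → δ < 1 →
      ∀ n : ℕ, (n : ℝ) ≥ c * d / (ε * α) * Real.log (d / (δ * α)) →
      ∃ M : Multiset ℕ → PMF (Multiset ℕ),
        -- M is ε-differentially private on size-n databases over {1,…,2^d}
        (∀ D D'' : Multiset ℕ, D.card = n → D''.card = n →
          (∀ x ∈ D, 1 ≤ x ∧ x ≤ 2 ^ d) → (∀ x ∈ D'', 1 ≤ x ∧ x ≤ 2 ^ d) →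
          Neighbor D D'' →
          ∀ E : Set (Multiset ℕ),
            (M D).toOuterMeasure E ≤
              ENNReal.ofReal (Real.exp ε) * (M D'').toOuterMeasure E) ∧
        -- M outputs databases over {1,…,2^d}
        (∀ D : Multiset ℕ, ∀ Dhat ∈ (M D).support, Dhat ≠ 0 ∧ ∀ x ∈ Dhat, 1 ≤ x ∧ x ≤ 2 ^ d) ∧
        -- M is (α, δ)-useful for all interval queries Q_{[a,b]} with 1 ≤ a ≤ b ≤ 2^d
        (∀ D : Multiset ℕ, D.card = n → D ≠ 0 → (∀ x ∈ D, 1 ≤ x ∧ x ≤ 2 ^ d) →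
          1 - ENNReal.ofReal δ ≤
            (M D).toOuterMeasure {Dhat | ∀ a b : ℕ, 1 ≤ a → a ≤ b → b ≤ 2 ^ d →
              |iquery a b Dhat - iquery a b D| ≤ α}) := by
  refine ⟨2560, by norm_num, ?_⟩
  intro d hd ε α δ hε hα hα1 hδ hδ1 n hn
  by_cases hw : 2 ≤ (d:ℝ) / (δ * α)
  · exact main_case d hd ε α δ hε hα hα1 hδ hδ1 hw n hn
  · push Not at hw
    rw [div_lt_iff₀ (by positivity)] at hw
    have h1 : δ * α < 1 := by nlinarith
    have hd2 : (d:ℝ) < 2 := by linarith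
    have hd1 : d = 1 := by
      have : d < 2 := by exact_mod_cast hd2
      omega
    subst hd1
    apply easy_case ε α δ hε _ n
    push_cast at hw
    nlinarith
end

section
/- Let n ≥ 1, ε ≥ 0, and 0 < δ < 1/2. Call a real number r a δ-approximate median of a database D = (x_1, …, x_n) ∈ [0,1]^n if |{i : x_i ≤ r}| ≥ (1/2 − δ)n and |{i : x_i ≥ r}| ≥ (1/2 − δ)n. Then there is no mechanism A, assigning to each database D ∈ [0,1]^n a probability distribution A(D) on ℝ, that is ε-differentially private and satisfies Pr[A(D) is a δ-approximate median of D] > 0 for every database D ∈ [0,1]^n. -/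
attribute [local instance] Classical.propDecidable

open MeasureTheory

theorem stmt11 (n : ℕ) (hn : 1 ≤ n) (ε : ℝ) (hε : 0 ≤ ε) (δ : ℝ)
    (hδ0 : 0 < δ) (hδ1 : δ < 1 / 2) :
    ¬ ∃ A : (Fin n → Set.Icc (0 : ℝ) 1) → Measure ℝ,
      -- A(D) is a probability distribution on ℝ
      (∀ D, IsProbabilityMeasure (A D)) ∧
      -- A is ε-differentially private
      (∀ D D' : Fin n → Set.Icc (0 : ℝ) 1, (∃ j, ∀ i, i ≠ j → D i = D' i) →
        ∀ S : Set ℝ, MeasurableSet S →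
          A D S ≤ ENNReal.ofReal (Real.exp ε) * A D' S) ∧
      -- A outputs a δ-approximate median with positive probability on every database
      (∀ D : Fin n → Set.Icc (0 : ℝ) 1,
        0 < A D {r : ℝ |
          (1 / 2 - δ) * n ≤ ((Finset.univ.filter (fun i => (D i : ℝ) ≤ r)).card : ℝ) ∧
          (1 / 2 - δ) * n ≤ ((Finset.univ.filter (fun i => r ≤ (D i : ℝ))).card : ℝ)}) := by
  rintro ⟨A, hP, hdp, hmed⟩
  have key : ∀ x : Set.Icc (0 : ℝ) 1, 0 < A (fun _ => 0) {(x : ℝ)} := by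
    intro x
    rw [pos_iff_ne_zero]
    intro h0
    have hs : ∀ s : Finset (Fin n), A (fun i => if i ∈ s then x else 0) {(x : ℝ)} = 0 := by
      intro s
      induction s using Finset.induction_on with
      | empty => simpa using h0
      | insert a s ha ih =>
        have h := hdp (fun i => if i ∈ insert a s then x else 0)
          (fun i => if i ∈ s then x else 0) ⟨a, fun i hi => by simp [hi]⟩ {(x : ℝ)}
          (measurableSet_singleton _)
        rw [ih, mul_zero] at h
        exact le_antisymm h (zero_le)
    have h1 := hs Finset.univ
    simp only [Finset.mem_univ, if_true] at h1
    refine (hmed (fun _ => x)).ne' (measure_mono_null ?_ h1)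
    have hpos : 0 < (1 / 2 - δ) * (n : ℝ) := by
      have : (0 : ℝ) < n := by exact_mod_cast hn
      exact mul_pos (by linarith) this
    rintro r ⟨ha, hb⟩
    have ha' := hpos.trans_le ha
    have hb' := hpos.trans_le hb
    rw [Nat.cast_pos, Finset.card_pos] at ha' hb'
    obtain ⟨i, hi⟩ := ha'
    obtain ⟨j, hj⟩ := hb'
    exact le_antisymm (Finset.mem_filter.1 hj).2 (Finset.mem_filter.1 hi).2
  have := hP (fun _ => 0)
  have hc := Measure.countable_meas_pos_of_disjoint_iUnion (μ := A (fun _ => 0))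
    (As := fun x : Set.Icc (0 : ℝ) 1 => {(x : ℝ)}) (fun x => measurableSet_singleton _)
    (fun x y hxy => by
      simpa [Function.onFun, Set.disjoint_singleton, Subtype.ext_iff] using hxy)
  have hu : {x : Set.Icc (0 : ℝ) 1 | 0 < A (fun _ => 0) {(x : ℝ)}} = Set.univ :=
    Set.eq_univ_of_forall key
  rw [hu, Set.countable_univ_iff] at hc
  have h2 : (Set.Icc (0 : ℝ) 1).Countable := hc
  have h3 := h2.measure_zero volume
  simp at h3
end
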